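/- arXiv:1805.10071 — 2 statements merged into one kernel-verified Lean document; each statement's English description precedes it below -/
import Mathlib

section
/- Almost surely the sequence M_n = X_n Y_n Z_n converges to a limit M ∈ [0, 1/27], and the law of M gives positive probability to every nonempty open subinterval of (0, 1/27). -/
open MeasureTheory ProbabilityTheory Filter Set Topology

noncomputable section

/-- `γ_n = γ₀ + 4 n`. -/
def rpsGamma (γ₀ : ℝ) (n : ℕ) : ℝ := γ₀ + 4 * n

/-- The increments to the (unnormalised) degrees of the three types
for each of the six possible transitions. -/
def rpsIncr : Fin 6 → ℝ × ℝ × ℝ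
  | 0 => (4, 0, 0)
  | 1 => (0, 4, 0)
  | 2 => (0, 0, 4)
  | 3 => (1, 3, 0)
  | 4 => (0, 1, 3)
  | 5 => (3, 0, 1)

/-- The conditional probability of each of the six possible transitions,
as a function of the current state `(x, y, z)`. -/
def rpsProb (i : Fin 6) (x y z : ℝ) : ℝ :=
  match i with
  | 0 => x ^ 2
  | 1 => y ^ 2
  | 2 => z ^ 2
  | 3 => 2 * x * y
  | 4 => 2 * y * z
  | 5 => 2 * z * x

/-- The rock–paper–scissors preferential attachment chain: an adapted process
`(X n, Y n, Z n)` with values in the simplex `Δ²`, deterministic strictly positive initial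
condition and, conditionally on `𝔉 n`, the six possible transitions have the prescribed
probabilities. -/
structure RPSChain {Ω : Type*} [MeasurableSpace Ω] (μ : Measure Ω) (γ₀ : ℝ) where
  F : Filtration ℕ ‹MeasurableSpace Ω›
  X : ℕ → Ω → ℝ
  Y : ℕ → Ω → ℝ
  Z : ℕ → Ω → ℝ
  adapted_X : Adapted F X
  adapted_Y : Adapted F Y
  adapted_Z : Adapted F Z
  nonneg_X : ∀ n ω, 0 ≤ X n ω
  nonneg_Y : ∀ n ω, 0 ≤ Y n ω
  nonneg_Z : ∀ n ω, 0 ≤ Z n ω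
  sum_eq_one : ∀ n ω, X n ω + Y n ω + Z n ω = 1
  init_X_pos : ∀ ω, 0 < X 0 ω
  init_Y_pos : ∀ ω, 0 < Y 0 ω
  init_Z_pos : ∀ ω, 0 < Z 0 ω
  init_X_const : ∀ ω ω', X 0 ω = X 0 ω'
  init_Y_const : ∀ ω ω', Y 0 ω = Y 0 ω'
  init_Z_const : ∀ ω ω', Z 0 ω = Z 0 ω'
  step : ∀ (n : ℕ) (i : Fin 6),
    μ[Set.indicator
        {ω | X (n+1) ω = (rpsGamma γ₀ n * X n ω + (rpsIncr i).1) / rpsGamma γ₀ (n+1) ∧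
             Y (n+1) ω = (rpsGamma γ₀ n * Y n ω + (rpsIncr i).2.1) / rpsGamma γ₀ (n+1) ∧
             Z (n+1) ω = (rpsGamma γ₀ n * Z n ω + (rpsIncr i).2.2) / rpsGamma γ₀ (n+1)}
        (fun _ => (1 : ℝ)) | F n]
      =ᵐ[μ] fun ω => rpsProb i (X n ω) (Y n ω) (Z n ω)

/-!
The conditional mean of `M_{n+1}` given the state at time `n` is `M_n (1 - 30 / γ_{n+1}² +
56 / γ_{n+1}³) ≤ M_n`, so `M` is a bounded supermartingale and converges almost surely. For fixed
`m`, both this drift and the conditional variance of `M_{n+1}` are of order `γ_{n+1}⁻²`, which is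
summable: `(M_n - m)² + 51 / γ_n` is again a supermartingale. A nonnegative supermartingale which
is below `r` at some time with positive probability is, with positive probability, below `r`
infinitely often; hence if with positive probability `M_n` is close to `m` at a large time `n`,
then with positive probability the limit of `M` is close to `m`. Finally, using only the three
transitions that add `4` to one degree, the chain comes close to any point of the simplex, in
particular to one where `xyz = m`.
-/

section CondExp

variable {Ω ι : Type*} [Fintype ι] {m mΩ : MeasurableSpace Ω} {μ : Measure Ω} [IsFiniteMeasure μ]

lemma measure_inter_pos_of_condExp_indicator_pos (hm : m ≤ mΩ) {s E : Set Ω} {p : Ω → ℝ}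
    (hs : MeasurableSet[m] s) (hE : MeasurableSet E) (hp : μ⟦E | m⟧ =ᵐ[μ] p)
    (hpos : ∀ ω ∈ s, 0 < p ω) (hμs : 0 < μ s) : 0 < μ (s ∩ E) := by
  have hreal : μ.real (s ∩ E) = ∫ ω in s, p ω ∂μ := by
    rw [setIntegral_congr_ae (hm s hs) (hp.symm.mono fun ω h _ ↦ h),
      setIntegral_condExp hm ((integrable_const 1).indicator hE) hs, setIntegral_indicator hE]
    simp
  have hint : 0 < ∫ ω in s, p ω ∂μ := by
    rw [setIntegral_pos_iff_support_of_nonneg_ae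
      ((ae_restrict_mem (hm s hs)).mono fun ω hω ↦ (hpos ω hω).le)
      (integrable_condExp.congr hp).integrableOn]
    have hsupp : s ⊆ Function.support p := fun ω hω ↦ (hpos ω hω).ne'
    rwa [inter_eq_right.2 hsupp]
  exact (ENNReal.toReal_pos_iff.1 (hint.trans_eq hreal.symm)).1

lemma ae_mem_iUnion_of_sum_condExp_indicator_eq_one (hm : m ≤ mΩ) {E : ι → Set Ω}
    {p : ι → Ω → ℝ} (hE : ∀ i, MeasurableSet (E i)) (hdisj : Pairwise (Function.onFun Disjoint E))
    (hp : ∀ i, μ⟦E i | m⟧ =ᵐ[μ] p i) (hsum : ∀ᵐ ω ∂μ, ∑ i, p i ω = 1) :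
    ∀ᵐ ω ∂μ, ω ∈ ⋃ i, E i := by
  have hreal (i : ι) : μ.real (E i) = ∫ ω, p i ω ∂μ := by
    rw [← integral_congr_ae (hp i), integral_condExp hm, integral_indicator_const _ (hE i)]
    simp
  have hU : μ.real (⋃ i, E i) = μ.real univ := by
    calc μ.real (⋃ i, E i) = ∑ i, ∫ ω, p i ω ∂μ := by
          rw [measureReal_iUnion_fintype hdisj hE]; simp only [hreal]
      _ = ∫ ω, ∑ i, p i ω ∂μ :=
          (integral_finsetSum _ fun i _ ↦ integrable_condExp.congr (hp i)).symm
      _ = μ.real univ := by rw [integral_congr_ae hsum]; simp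
  rw [measureReal_def, measureReal_def, ENNReal.toReal_eq_toReal_iff' (by finiteness)
    (by finiteness)] at hU
  exact (ae_mem_iff_measure_eq (MeasurableSet.iUnion hE).nullMeasurableSet).2 hU

lemma condExp_eq_sum_mul_of_eqOn (hm : m ≤ mΩ) {E : ι → Set Ω} {p g : ι → Ω → ℝ} {f : Ω → ℝ}
    (hE : ∀ i, MeasurableSet (E i)) (hdisj : Pairwise (Function.onFun Disjoint E))
    (hp : ∀ i, μ⟦E i | m⟧ =ᵐ[μ] p i) (hsum : ∀ᵐ ω ∂μ, ∑ i, p i ω = 1)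
    (hf : Integrable f μ) (hg : ∀ i, StronglyMeasurable[m] (g i)) (hfg : ∀ i, EqOn f (g i) (E i)) :
    μ[f|m] =ᵐ[μ] fun ω ↦ ∑ i, p i ω * g i ω := by
  have hmul (i : ι) : (E i).indicator f = (E i).indicator (fun _ ↦ (1 : ℝ)) * g i := by
    ext ω
    by_cases h : ω ∈ E i
    · simp [h, hfg i h]
    · simp [h]
  have hf_ae : f =ᵐ[μ] ∑ i, (E i).indicator f := by
    filter_upwards [ae_mem_iUnion_of_sum_condExp_indicator_eq_one hm hE hdisj hp hsum] with ω hω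
    obtain ⟨i, hi⟩ := mem_iUnion.1 hω
    rw [Finset.sum_apply, Finset.sum_eq_single_of_mem i (Finset.mem_univ i), indicator_of_mem hi]
    exact fun j _ hji ↦ indicator_of_notMem (disjoint_right.1 (hdisj hji) hi) f
  have hterm (i : ι) : μ[(E i).indicator f|m] =ᵐ[μ] fun ω ↦ p i ω * g i ω := by
    have hint := hf.indicator (hE i)
    rw [hmul] at hint ⊢
    exact (condExp_mul_of_stronglyMeasurable_right (hg i) hint
      ((integrable_const 1).indicator (hE i))).trans ((hp i).mul .rfl)
  calc μ[f|m] =ᵐ[μ] μ[∑ i, (E i).indicator f|m] := condExp_congr_ae hf_ae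
    _ =ᵐ[μ] ∑ i, μ[(E i).indicator f|m] := condExp_finsetSum (fun i _ ↦ hf.indicator (hE i)) m
    _ =ᵐ[μ] fun ω ↦ ∑ i, p i ω * g i ω := by
      filter_upwards [ae_all_iff.2 hterm] with ω hω
      simp only [Finset.sum_apply, hω]

end CondExp

section Supermartingale

variable {Ω : Type*} {mΩ : MeasurableSpace Ω} {μ : Measure Ω} [IsFiniteMeasure μ]
  {F : Filtration ℕ mΩ} {W : ℕ → Ω → ℝ}

lemma setLIntegral_ofReal_le_of_supermartingale (hW : Supermartingale W F μ)
    (hnonneg : ∀ n, 0 ≤ᵐ[μ] W n) {n k : ℕ} (hnk : n ≤ k) {s : Set Ω} (hs : MeasurableSet[F n] s) :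
    ∫⁻ ω in s, ENNReal.ofReal (W k ω) ∂μ ≤ ∫⁻ ω in s, ENNReal.ofReal (W n ω) ∂μ := by
  rw [← ofReal_integral_eq_lintegral_ofReal (hW.integrable k).integrableOn
      (ae_restrict_of_ae (hnonneg k)),
    ← ofReal_integral_eq_lintegral_ofReal (hW.integrable n).integrableOn
      (ae_restrict_of_ae (hnonneg n))]
  exact ENNReal.ofReal_le_ofReal (hW.setIntegral_le hnk hs)

lemma ae_exists_tendsto_of_supermartingale (hW : Supermartingale W F μ)
    (hnonneg : ∀ n, 0 ≤ᵐ[μ] W n) : ∀ᵐ ω ∂μ, ∃ l, Tendsto (W · ω) atTop (𝓝 l) := by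
  have hnorm (k : ℕ) : eLpNorm ((-W) k) 1 μ = ∫⁻ ω, ENNReal.ofReal (W k ω) ∂μ := by
    rw [Pi.neg_apply, eLpNorm_neg, eLpNorm_one_eq_lintegral_enorm]
    exact lintegral_congr_ae ((hnonneg k).mono fun ω h ↦ Real.enorm_of_nonneg h)
  have hbdd (k : ℕ) :
      eLpNorm ((-W) k) 1 μ ≤ (∫⁻ ω, ENNReal.ofReal (W 0 ω) ∂μ).toNNReal := by
    rw [hnorm, ENNReal.coe_toNNReal (hW.integrable 0).lintegral_lt_top.ne]
    simpa using setLIntegral_ofReal_le_of_supermartingale hW hnonneg k.zero_le MeasurableSet.univ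
  filter_upwards [hW.neg.exists_ae_tendsto_of_bdd hbdd] with ω ⟨l, hl⟩
  exact ⟨-l, by simpa using hl.neg⟩

/- Otherwise `W k ≥ r` eventually, almost surely, and Fatou's lemma on `{W n < r}` contradicts
the decrease of the integrals of `W` over that event. -/
lemma measure_frequently_lt_pos_of_supermartingale (hW : Supermartingale W F μ)
    (hnonneg : ∀ n, 0 ≤ᵐ[μ] W n) {n : ℕ} {r : ℝ} (hn : 0 < μ {ω | W n ω < r}) :
    0 < μ {ω | ∃ᶠ k in atTop, W k ω < r} := by
  by_contra hzero
  have hlarge : ∀ᵐ ω ∂μ, ∀ᶠ k in atTop, r ≤ W k ω := by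
    simpa only [ae_iff, not_eventually, not_le, not_lt, nonpos_iff_eq_zero] using hzero
  set s := {ω | W n ω < r}
  have hs : MeasurableSet[F n] s :=
    (hW.stronglyMeasurable n).measurable measurableSet_Iio
  have hmeas (k : ℕ) : Measurable (W k) := ((hW.stronglyMeasurable k).mono (F.le k)).measurable
  have hlt : ∫⁻ ω in s, ENNReal.ofReal (W n ω) ∂μ < ∫⁻ _ in s, ENNReal.ofReal r ∂μ := by
    refine setLIntegral_strict_mono (F.le n s hs) hn.ne' measurable_const
      (hW.integrable n).integrableOn.lintegral_lt_top.ne ?_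
    filter_upwards [hnonneg n] with ω h0 hω
    exact (ENNReal.ofReal_lt_ofReal_iff_of_nonneg h0).2 hω
  refine hlt.not_ge ?_
  calc ∫⁻ _ in s, ENNReal.ofReal r ∂μ
      ≤ ∫⁻ ω in s, liminf (fun k ↦ ENNReal.ofReal (W k ω)) atTop ∂μ := by
        refine lintegral_mono_ae (ae_restrict_of_ae (hlarge.mono fun ω h ↦ ?_))
        exact le_liminf_of_le (h := h.mono fun k hk ↦ ENNReal.ofReal_le_ofReal hk)
    _ ≤ liminf (fun k ↦ ∫⁻ ω in s, ENNReal.ofReal (W k ω) ∂μ) atTop :=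
        lintegral_liminf_le fun k ↦ (hmeas k).ennreal_ofReal
    _ ≤ ∫⁻ ω in s, ENNReal.ofReal (W n ω) ∂μ := by
        refine liminf_le_of_frequently_le' (Eventually.frequently ?_)
        filter_upwards [eventually_ge_atTop n] with k hk
        exact setLIntegral_ofReal_le_of_supermartingale hW hnonneg hk hs

end Supermartingale

section Gamma

variable {γ₀ : ℝ}

lemma rpsGamma_succ (γ₀ : ℝ) (n : ℕ) : rpsGamma γ₀ (n + 1) = rpsGamma γ₀ n + 4 := by
  simp only [rpsGamma, Nat.cast_add, Nat.cast_one]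
  ring

lemma rpsGamma_pos (hγ₀ : 0 < γ₀) (n : ℕ) : 0 < rpsGamma γ₀ n := by
  unfold rpsGamma
  positivity

lemma tendsto_rpsGamma_atTop (γ₀ : ℝ) : Tendsto (rpsGamma γ₀) atTop atTop :=
  tendsto_atTop_add_const_left _ _ (tendsto_natCast_atTop_atTop.const_mul_atTop four_pos)

lemma tendsto_natCast_div_rpsGamma (γ₀ : ℝ) :
    Tendsto (fun n : ℕ ↦ (n : ℝ) / rpsGamma γ₀ n) atTop (𝓝 4⁻¹) := by
  have h := ((tendsto_const_div_atTop_nhds_zero_nat γ₀).add_const 4).inv₀ (by norm_num)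
  rw [zero_add] at h
  refine h.congr' ?_
  filter_upwards [eventually_ne_atTop 0] with n hn
  rw [rpsGamma, ← inv_div _ (n : ℝ), add_div, mul_div_cancel_right₀ _ (Nat.cast_ne_zero.2 hn)]

lemma four_div_sq_le_inv_rpsGamma_sub_inv (hγ₀ : 0 < γ₀) (n : ℕ) :
    4 / rpsGamma γ₀ (n + 1) ^ 2 ≤ (rpsGamma γ₀ n)⁻¹ - (rpsGamma γ₀ (n + 1))⁻¹ := by
  have h := rpsGamma_pos hγ₀ n
  rw [rpsGamma_succ, inv_sub_inv (by positivity) (by positivity), add_sub_cancel_left, sq]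
  gcongr
  linarith

end Gamma

section Simplex

/-- The simplex `Δ²`, in the encoding of triples used by `rpsIncr`. -/
def rpsSimplex : Set (ℝ × ℝ × ℝ) :=
  {p | 0 ≤ p.1 ∧ 0 ≤ p.2.1 ∧ 0 ≤ p.2.2 ∧ p.1 + p.2.1 + p.2.2 = 1}

/-- The product `xyz` of the coordinates of a state, so that `M_n` is `rpsM` of the `n`-th state. -/
def rpsM (p : ℝ × ℝ × ℝ) : ℝ := p.1 * p.2.1 * p.2.2

lemma continuous_rpsM : Continuous rpsM := by
  unfold rpsM
  fun_prop

lemma rpsM_mem_Icc {p : ℝ × ℝ × ℝ} (hp : p ∈ rpsSimplex) : rpsM p ∈ Icc (0 : ℝ) (1 / 27) := by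
  obtain ⟨x, y, z⟩ := p
  obtain ⟨hx, hy, hz, hsum⟩ : 0 ≤ x ∧ 0 ≤ y ∧ 0 ≤ z ∧ x + y + z = 1 := hp
  refine ⟨by unfold rpsM; positivity, ?_⟩
  have amgm : 27 * (x * y * z) ≤ (x + y + z) ^ 3 := by
    nlinarith [mul_nonneg hx (sq_nonneg (y - z)), mul_nonneg hy (sq_nonneg (x - z)),
      mul_nonneg hz (sq_nonneg (x - y)), mul_nonneg (add_nonneg (add_nonneg hx hy) hz)
        (add_nonneg (add_nonneg (sq_nonneg (x - y)) (sq_nonneg (y - z))) (sq_nonneg (x - z)))]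
  rw [hsum] at amgm
  change x * y * z ≤ 1 / 27
  linarith

lemma exists_mem_rpsSimplex_rpsM_eq {m : ℝ} (hm : m ∈ Icc (0 : ℝ) (1 / 27)) :
    ∃ q ∈ rpsSimplex, rpsM q = m := by
  have hivt := intermediate_value_Icc (a := (0 : ℝ)) (b := 1 / 3)
    (f := fun t ↦ rpsM (t, t, 1 - 2 * t)) (by norm_num)
    (continuous_rpsM.comp (by fun_prop)).continuousOn
  obtain ⟨t, ⟨ht0, ht1⟩, ht⟩ := hivt (by norm_num [rpsM]; exact ⟨hm.1, by linarith [hm.2]⟩)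
  exact ⟨_, ⟨ht0, ht0, by dsimp; linarith, by dsimp; ring⟩, ht⟩

lemma abs_rpsM_sub_le {p q : ℝ × ℝ × ℝ} (hp : p ∈ rpsSimplex) (hq : q ∈ rpsSimplex) :
    |rpsM q - rpsM p| ≤ 3 * dist q p := by
  obtain ⟨hx, hy, hz, hp1⟩ := hp
  obtain ⟨hx', hy', hz', hq1⟩ := hq
  have hterm {d a b : ℝ} (hd : |d| ≤ dist q p) (ha : 0 ≤ a) (ha1 : a ≤ 1) (hb : 0 ≤ b)
      (hb1 : b ≤ 1) : |d * (a * b)| ≤ dist q p := by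
    rw [abs_mul, abs_of_nonneg (mul_nonneg ha hb)]
    exact (mul_le_of_le_one_right (abs_nonneg d) (mul_le_one₀ ha1 hb hb1)).trans hd
  have h1 : |q.1 - p.1| ≤ dist q p := le_max_left _ _
  have h2 : |q.2.1 - p.2.1| ≤ dist q p := (le_max_left _ _).trans (le_max_right _ _)
  have h3 : |q.2.2 - p.2.2| ≤ dist q p := (le_max_right _ _).trans (le_max_right _ _)
  calc |rpsM q - rpsM p|
      = |(q.1 - p.1) * (q.2.1 * q.2.2) + (q.2.1 - p.2.1) * (p.1 * q.2.2)
          + (q.2.2 - p.2.2) * (p.1 * p.2.1)| := by unfold rpsM; congr 1; ring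
    _ ≤ _ := abs_add_three _ _ _
    _ ≤ dist q p + dist q p + dist q p := by
        gcongr
        · exact hterm h1 hy' (by linarith) hz' (by linarith)
        · exact hterm h2 hx (by linarith) hz' (by linarith)
        · exact hterm h3 hx (by linarith) hy (by linarith)
    _ = 3 * dist q p := by ring

lemma exists_nat_add_add_eq_tendsto_div {q : ℝ × ℝ × ℝ} (hq : q ∈ rpsSimplex) :
    ∃ a b d : ℕ → ℕ, (∀ n, a n + b n + d n = n) ∧
      Tendsto (fun n ↦ (a n / n : ℝ)) atTop (𝓝 q.1) ∧
      Tendsto (fun n ↦ (b n / n : ℝ)) atTop (𝓝 q.2.1) ∧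
      Tendsto (fun n ↦ (d n / n : ℝ)) atTop (𝓝 q.2.2) := by
  obtain ⟨hx, hy, hz, hsum⟩ := hq
  let a (n : ℕ) := ⌊q.1 * n⌋₊
  let b (n : ℕ) := ⌊q.2.1 * n⌋₊
  have hab (n : ℕ) : a n + b n ≤ n := by
    have ha : (a n : ℝ) ≤ q.1 * n := Nat.floor_le (by positivity)
    have hb : (b n : ℝ) ≤ q.2.1 * n := Nat.floor_le (by positivity)
    have hz' : 0 ≤ q.2.2 * n := by positivity
    have hn : q.1 * n + q.2.1 * n + q.2.2 * n = n := by rw [← add_mul, ← add_mul, hsum, one_mul]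
    exact_mod_cast (by linarith : (a n : ℝ) + b n ≤ n)
  have ha : Tendsto (fun n ↦ (a n / n : ℝ)) atTop (𝓝 q.1) :=
    (tendsto_nat_floor_mul_div_atTop hx).comp tendsto_natCast_atTop_atTop
  have hb : Tendsto (fun n ↦ (b n / n : ℝ)) atTop (𝓝 q.2.1) :=
    (tendsto_nat_floor_mul_div_atTop hy).comp tendsto_natCast_atTop_atTop
  refine ⟨a, b, fun n ↦ n - (a n + b n), fun n ↦ Nat.add_sub_cancel' (hab n), ha, hb, ?_⟩
  rw [show q.2.2 = 1 - (q.1 + q.2.1) by linarith]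
  refine ((ha.add hb).const_sub 1).congr' ?_
  filter_upwards [eventually_ne_atTop 0] with n hn
  rw [Nat.cast_sub (hab n), Nat.cast_add, sub_div, add_div, div_self (Nat.cast_ne_zero.2 hn)]

end Simplex

section Increment

lemma rpsIncr_injective : Function.Injective rpsIncr := by
  intro i j h
  fin_cases i <;> fin_cases j <;> simp_all [rpsIncr]

lemma rpsIncr_nonneg (i : Fin 6) : 0 ≤ rpsIncr i := by
  fin_cases i <;> simp [rpsIncr, Prod.le_def]

lemma rpsIncr_sum (i : Fin 6) : (rpsIncr i).1 + (rpsIncr i).2.1 + (rpsIncr i).2.2 = 4 := by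
  fin_cases i <;> norm_num [rpsIncr]

lemma add_smul_rpsIncr_pos {v : ℝ × ℝ × ℝ} (hv : 0 < v.1 ∧ 0 < v.2.1 ∧ 0 < v.2.2) (i : Fin 6)
    (k : ℕ) : 0 < (v + (k : ℝ) • rpsIncr i).1 ∧ 0 < (v + (k : ℝ) • rpsIncr i).2.1 ∧
      0 < (v + (k : ℝ) • rpsIncr i).2.2 := by
  have hk : 0 ≤ (k : ℝ) • rpsIncr i := smul_nonneg k.cast_nonneg (rpsIncr_nonneg i)
  exact ⟨add_pos_of_pos_of_nonneg hv.1 hk.1, add_pos_of_pos_of_nonneg hv.2.1 hk.2.1,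
    add_pos_of_pos_of_nonneg hv.2.2 hk.2.2⟩

lemma exists_nat_tendsto_inv_rpsGamma_smul (γ₀ : ℝ) (v : ℝ × ℝ × ℝ) {q : ℝ × ℝ × ℝ}
    (hq : q ∈ rpsSimplex) :
    ∃ a b d : ℕ → ℕ, (∀ n, a n + b n + d n = n) ∧
      Tendsto (fun n ↦ (rpsGamma γ₀ n)⁻¹ • (v + (a n : ℝ) • rpsIncr 0 + (b n : ℝ) • rpsIncr 1 +
        (d n : ℝ) • rpsIncr 2)) atTop (𝓝 q) := by
  obtain ⟨a, b, d, habd, ha, hb, hd⟩ := exists_nat_add_add_eq_tendsto_div hq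
  refine ⟨a, b, d, habd, ?_⟩
  have hdiv := ((((tendsto_inv_atTop_nhds_zero_nat (𝕜 := ℝ)).smul_const v).add
    (ha.smul_const (rpsIncr 0))).add (hb.smul_const (rpsIncr 1))).add (hd.smul_const (rpsIncr 2))
  have hq_eq : (4⁻¹ : ℝ) • ((0 : ℝ) • v + q.1 • rpsIncr 0 + q.2.1 • rpsIncr 1 +
      q.2.2 • rpsIncr 2) = q := by
    ext <;> simp [rpsIncr, mul_comm _ (4 : ℝ)]
  have hmul := (tendsto_natCast_div_rpsGamma γ₀).smul hdiv
  rw [hq_eq] at hmul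
  refine hmul.congr' ?_
  filter_upwards [eventually_ne_atTop 0] with n hn
  have hn' : (n : ℝ) ≠ 0 := Nat.cast_ne_zero.2 hn
  have hsum : (n : ℝ)⁻¹ • v + (a n / n : ℝ) • rpsIncr 0 + (b n / n : ℝ) • rpsIncr 1 +
      (d n / n : ℝ) • rpsIncr 2 = (n : ℝ)⁻¹ • (v + (a n : ℝ) • rpsIncr 0 +
        (b n : ℝ) • rpsIncr 1 + (d n : ℝ) • rpsIncr 2) := by
    module
  rw [hsum, smul_smul, div_mul_eq_mul_div, mul_inv_cancel₀ hn', one_div]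

end Increment

section Transition

variable {γ₀ : ℝ} {p : ℝ × ℝ × ℝ}

/-- The state reached at time `n + 1` from the state `p` at time `n` by the transition `i`: the
degrees `γ_n p` increase by `rpsIncr i` and are normalised by `γ_{n+1}`. -/
def rpsStep (γ₀ : ℝ) (n : ℕ) (i : Fin 6) (p : ℝ × ℝ × ℝ) : ℝ × ℝ × ℝ :=
  (rpsGamma γ₀ (n + 1))⁻¹ • (rpsGamma γ₀ n • p + rpsIncr i)

/-- The one-step transition operator of the chain at time `n`, acting on observables `g`. -/
def rpsMean (γ₀ : ℝ) (n : ℕ) (g : ℝ × ℝ × ℝ → ℝ) (p : ℝ × ℝ × ℝ) : ℝ :=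
  ∑ i, rpsProb i p.1 p.2.1 p.2.2 * g (rpsStep γ₀ n i p)

lemma continuous_rpsStep (γ₀ : ℝ) (n : ℕ) (i : Fin 6) : Continuous (rpsStep γ₀ n i) := by
  unfold rpsStep
  fun_prop

lemma sum_rpsProb (x y z : ℝ) : ∑ i, rpsProb i x y z = (x + y + z) ^ 2 := by
  simp only [Fin.sum_univ_six, rpsProb]
  ring

lemma sum_rpsProb_of_mem_rpsSimplex (hp : p ∈ rpsSimplex) :
    ∑ i, rpsProb i p.1 p.2.1 p.2.2 = 1 := by
  rw [sum_rpsProb, hp.2.2.2, one_pow]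

lemma rpsProb_nonneg (i : Fin 6) {x y z : ℝ} (hx : 0 ≤ x) (hy : 0 ≤ y) (hz : 0 ≤ z) :
    0 ≤ rpsProb i x y z := by
  fin_cases i <;> dsimp only [rpsProb] <;> positivity

lemma rpsProb_pos (i : Fin 6) {x y z : ℝ} (hx : 0 < x) (hy : 0 < y) (hz : 0 < z) :
    0 < rpsProb i x y z := by
  fin_cases i <;> dsimp only [rpsProb] <;> positivity

lemma rpsGamma_smul_rpsStep (hγ₀ : 0 < γ₀) (n : ℕ) (i : Fin 6) (p : ℝ × ℝ × ℝ) :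
    rpsGamma γ₀ (n + 1) • rpsStep γ₀ n i p = rpsGamma γ₀ n • p + rpsIncr i :=
  smul_inv_smul₀ (rpsGamma_pos hγ₀ _).ne' _

lemma rpsStep_injective_left (hγ₀ : 0 < γ₀) (n : ℕ) (p : ℝ × ℝ × ℝ) :
    Function.Injective (rpsStep γ₀ n · p) := by
  intro i j h
  have h' := congrArg (rpsGamma γ₀ (n + 1) • ·) h
  simp only [rpsGamma_smul_rpsStep hγ₀] at h'
  exact rpsIncr_injective (add_left_cancel h')

lemma rpsStep_mem_rpsSimplex (hγ₀ : 0 < γ₀) (n : ℕ) (i : Fin 6) (hp : p ∈ rpsSimplex) :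
    rpsStep γ₀ n i p ∈ rpsSimplex := by
  obtain ⟨hx, hy, hz, hsum⟩ := hp
  obtain ⟨ix, iy, iz⟩ := rpsIncr_nonneg i
  have hγ := rpsGamma_pos hγ₀ n
  have hγ' := rpsGamma_pos hγ₀ (n + 1)
  simp only [Prod.fst_zero, Prod.snd_zero] at ix iy iz
  simp only [rpsSimplex, rpsStep, mem_ofPred_eq, Prod.smul_fst, Prod.smul_snd, Prod.fst_add,
    Prod.snd_add, smul_eq_mul]
  refine ⟨by positivity, by positivity, by positivity, ?_⟩
  rw [← mul_add, ← mul_add, inv_mul_eq_one₀ hγ'.ne', rpsGamma_succ]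
  linear_combination (-rpsGamma γ₀ n) * hsum - rpsIncr_sum i

lemma dist_rpsStep_le (hγ₀ : 0 < γ₀) (n : ℕ) (i : Fin 6) (hp : p ∈ rpsSimplex) :
    dist (rpsStep γ₀ n i p) p ≤ 4 / rpsGamma γ₀ (n + 1) := by
  have hγ' := rpsGamma_pos hγ₀ (n + 1)
  have hstep : rpsStep γ₀ n i p - p = (rpsGamma γ₀ (n + 1))⁻¹ • (rpsIncr i - (4 : ℝ) • p) := by
    rw [← inv_smul_smul₀ hγ'.ne' (rpsStep γ₀ n i p - p), smul_sub, rpsGamma_smul_rpsStep hγ₀,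
      rpsGamma_succ]
    module
  have hnorm : ‖rpsIncr i - (4 : ℝ) • p‖ ≤ 4 := by
    obtain ⟨hx, hy, hz, hsum⟩ := hp
    obtain ⟨ix, iy, iz⟩ := rpsIncr_nonneg i
    have isum := rpsIncr_sum i
    simp only [Prod.fst_zero, Prod.snd_zero] at ix iy iz
    refine norm_prod_le_iff.2 ⟨?_, norm_prod_le_iff.2 ⟨?_, ?_⟩⟩ <;>
      simp only [Prod.fst_sub, Prod.snd_sub, Prod.smul_fst, Prod.smul_snd, smul_eq_mul,
        Real.norm_eq_abs, abs_le] <;>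
      constructor <;> linarith
  rw [dist_eq_norm, hstep, norm_smul, norm_inv, Real.norm_of_nonneg hγ'.le, inv_mul_eq_div]
  gcongr

lemma abs_rpsM_rpsStep_sub_le (hγ₀ : 0 < γ₀) (n : ℕ) (i : Fin 6) (hp : p ∈ rpsSimplex) :
    |rpsM (rpsStep γ₀ n i p) - rpsM p| ≤ 12 / rpsGamma γ₀ (n + 1) :=
  calc |rpsM (rpsStep γ₀ n i p) - rpsM p|
      ≤ 3 * dist (rpsStep γ₀ n i p) p := abs_rpsM_sub_le hp (rpsStep_mem_rpsSimplex hγ₀ n i hp)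
    _ ≤ 3 * (4 / rpsGamma γ₀ (n + 1)) := by gcongr; exact dist_rpsStep_le hγ₀ n i hp
    _ = 12 / rpsGamma γ₀ (n + 1) := by ring

lemma rpsMean_rpsM (hγ₀ : 0 < γ₀) (n : ℕ) (hp : p.1 + p.2.1 + p.2.2 = 1) :
    rpsMean γ₀ n rpsM p =
      rpsM p * (1 - (30 / rpsGamma γ₀ (n + 1) ^ 2 - 56 / rpsGamma γ₀ (n + 1) ^ 3)) := by
  obtain ⟨x, y, z⟩ := p
  have hγ' := rpsGamma_pos hγ₀ (n + 1)
  have hγ : rpsGamma γ₀ n = rpsGamma γ₀ (n + 1) - 4 := by rw [rpsGamma_succ, add_sub_cancel_right]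
  obtain rfl : z = 1 - x - y := by dsimp at hp; linarith
  simp only [rpsMean, Fin.sum_univ_six, rpsProb, rpsM, rpsStep, rpsIncr, hγ, Prod.smul_mk,
    Prod.mk_add_mk, smul_eq_mul]
  field_simp
  ring

lemma rpsM_drift_mem_Icc (hγ₀ : 0 < γ₀) (n : ℕ) :
    30 / rpsGamma γ₀ (n + 1) ^ 2 - 56 / rpsGamma γ₀ (n + 1) ^ 3 ∈
      Icc 0 (30 / rpsGamma γ₀ (n + 1) ^ 2) := by
  have hγ := rpsGamma_pos hγ₀ n
  have hγ' := rpsGamma_pos hγ₀ (n + 1)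
  refine ⟨?_, sub_le_self _ (by positivity)⟩
  rw [sub_nonneg, div_le_div_iff₀ (by positivity) (by positivity), pow_succ _ 2]
  nlinarith [sq_pos_of_pos hγ', rpsGamma_succ γ₀ n]

lemma rpsMean_rpsM_le (hγ₀ : 0 < γ₀) (n : ℕ) (hp : p ∈ rpsSimplex) :
    rpsMean γ₀ n rpsM p ≤ rpsM p := by
  rw [rpsMean_rpsM hγ₀ n hp.2.2.2]
  exact mul_le_of_le_one_right (rpsM_mem_Icc hp).1
    (sub_le_self _ (rpsM_drift_mem_Icc hγ₀ n).1)

lemma abs_rpsMean_rpsM_sub_le (hγ₀ : 0 < γ₀) (n : ℕ) (hp : p ∈ rpsSimplex) :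
    |rpsMean γ₀ n rpsM p - rpsM p| ≤ 30 / rpsGamma γ₀ (n + 1) ^ 2 := by
  obtain ⟨hM0, hM1⟩ := rpsM_mem_Icc hp
  obtain ⟨hr0, hr1⟩ := rpsM_drift_mem_Icc hγ₀ n
  rw [rpsMean_rpsM hγ₀ n hp.2.2.2, mul_one_sub, sub_sub_cancel_left, abs_neg,
    abs_of_nonneg (mul_nonneg hM0 hr0)]
  exact (mul_le_of_le_one_left hr0 (by linarith)).trans hr1

lemma rpsMean_sq_sub (γ₀ : ℝ) (n : ℕ) (g : ℝ × ℝ × ℝ → ℝ) (m : ℝ) (hp : p ∈ rpsSimplex) :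
    rpsMean γ₀ n (fun q ↦ (g q - m) ^ 2) p =
      (g p - m) ^ 2 + 2 * (g p - m) * (rpsMean γ₀ n g p - g p) +
        rpsMean γ₀ n (fun q ↦ (g q - g p) ^ 2) p := by
  have hsum := sum_rpsProb_of_mem_rpsSimplex hp
  simp only [rpsMean, Fin.sum_univ_six] at hsum ⊢
  linear_combination (m ^ 2 - g p ^ 2) * hsum

lemma rpsMean_sq_rpsM_sub_le (hγ₀ : 0 < γ₀) (n : ℕ) (hp : p ∈ rpsSimplex) {m : ℝ}
    (hm : m ∈ Icc (0 : ℝ) 1) :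
    rpsMean γ₀ n (fun q ↦ (rpsM q - m) ^ 2) p ≤
      (rpsM p - m) ^ 2 + 204 / rpsGamma γ₀ (n + 1) ^ 2 := by
  obtain ⟨hM0, hM1⟩ := rpsM_mem_Icc hp
  have hdrift : 2 * (rpsM p - m) * (rpsMean γ₀ n rpsM p - rpsM p) ≤
      60 / rpsGamma γ₀ (n + 1) ^ 2 := by
    have hm1 : |rpsM p - m| ≤ 1 := abs_le.2 ⟨by linarith [hm.2], by linarith [hm.1]⟩
    calc 2 * (rpsM p - m) * (rpsMean γ₀ n rpsM p - rpsM p)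
        ≤ 2 * |rpsM p - m| * |rpsMean γ₀ n rpsM p - rpsM p| := by
          rw [mul_assoc, mul_assoc, ← abs_mul]
          gcongr
          exact le_abs_self _
      _ ≤ 2 * 1 * (30 / rpsGamma γ₀ (n + 1) ^ 2) := by
          gcongr
          exact abs_rpsMean_rpsM_sub_le hγ₀ n hp
      _ = 60 / rpsGamma γ₀ (n + 1) ^ 2 := by ring
  have hvar : rpsMean γ₀ n (fun q ↦ (rpsM q - rpsM p) ^ 2) p ≤
      144 / rpsGamma γ₀ (n + 1) ^ 2 := by
    calc rpsMean γ₀ n (fun q ↦ (rpsM q - rpsM p) ^ 2) p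
        ≤ ∑ i, rpsProb i p.1 p.2.1 p.2.2 * (12 / rpsGamma γ₀ (n + 1)) ^ 2 := by
          refine Finset.sum_le_sum fun i _ ↦ mul_le_mul_of_nonneg_left ?_
            (rpsProb_nonneg i hp.1 hp.2.1 hp.2.2.1)
          exact sq_le_sq.2 ((abs_rpsM_rpsStep_sub_le hγ₀ n i hp).trans (le_abs_self _))
      _ = 144 / rpsGamma γ₀ (n + 1) ^ 2 := by
          rw [← Finset.sum_mul, sum_rpsProb_of_mem_rpsSimplex hp]
          ring
  rw [rpsMean_sq_sub γ₀ n rpsM m hp]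
  calc _ ≤ (rpsM p - m) ^ 2 + 60 / rpsGamma γ₀ (n + 1) ^ 2 + 144 / rpsGamma γ₀ (n + 1) ^ 2 := by
        gcongr
    _ = _ := by ring

end Transition

namespace RPSChain

variable {Ω : Type*} [MeasurableSpace Ω] {μ : Measure Ω} {γ₀ : ℝ}

/-- The state `(X_n, Y_n, Z_n)` of the chain at time `n`, as a single random triple. -/
def state (c : RPSChain μ γ₀) (n : ℕ) (ω : Ω) : ℝ × ℝ × ℝ := (c.X n ω, c.Y n ω, c.Z n ω)

/-- The unnormalised degrees `γ_n (X_n, Y_n, Z_n)` of the three types, to which the transition `i`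
adds `rpsIncr i`. -/
def degree (c : RPSChain μ γ₀) (n : ℕ) (ω : Ω) : ℝ × ℝ × ℝ := rpsGamma γ₀ n • c.state n ω

/-- The event that the transition `i` takes place between the times `n` and `n + 1`. -/
def transition (c : RPSChain μ γ₀) (n : ℕ) (i : Fin 6) : Set Ω :=
  {ω | c.state (n + 1) ω = rpsStep γ₀ n i (c.state n ω)}

lemma state_mem_rpsSimplex (c : RPSChain μ γ₀) (n : ℕ) (ω : Ω) : c.state n ω ∈ rpsSimplex :=
  ⟨c.nonneg_X n ω, c.nonneg_Y n ω, c.nonneg_Z n ω, c.sum_eq_one n ω⟩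

lemma measurable_state_filtration (c : RPSChain μ γ₀) (n : ℕ) : Measurable[c.F n] (c.state n) :=
  (c.adapted_X n).prodMk ((c.adapted_Y n).prodMk (c.adapted_Z n))

lemma measurable_state (c : RPSChain μ γ₀) (n : ℕ) : Measurable (c.state n) :=
  (c.measurable_state_filtration n).mono (c.F.le n) le_rfl

lemma measurableSet_transition (c : RPSChain μ γ₀) (n : ℕ) (i : Fin 6) :
    MeasurableSet (c.transition n i) :=
  measurableSet_eq_fun (c.measurable_state _)
    ((continuous_rpsStep γ₀ n i).measurable.comp (c.measurable_state n))

lemma pairwise_disjoint_transition (c : RPSChain μ γ₀) (hγ₀ : 0 < γ₀) (n : ℕ) :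
    Pairwise (Function.onFun Disjoint (c.transition n)) := fun _ _ hij ↦
  disjoint_left.2 fun ω hi hj ↦ hij <|
    rpsStep_injective_left hγ₀ n (c.state n ω) (Eq.trans (Eq.symm hi) hj)

lemma condExp_indicator_transition (c : RPSChain μ γ₀) (n : ℕ) (i : Fin 6) :
    μ⟦c.transition n i | c.F n⟧ =ᵐ[μ]
      fun ω ↦ rpsProb i (c.state n ω).1 (c.state n ω).2.1 (c.state n ω).2.2 := by
  have htransition : c.transition n i = {ω |
      c.X (n + 1) ω = (rpsGamma γ₀ n * c.X n ω + (rpsIncr i).1) / rpsGamma γ₀ (n + 1) ∧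
      c.Y (n + 1) ω = (rpsGamma γ₀ n * c.Y n ω + (rpsIncr i).2.1) / rpsGamma γ₀ (n + 1) ∧
      c.Z (n + 1) ω = (rpsGamma γ₀ n * c.Z n ω + (rpsIncr i).2.2) / rpsGamma γ₀ (n + 1)} := by
    ext ω
    simp [transition, state, rpsStep, Prod.ext_iff, div_eq_inv_mul, mul_add]
  rw [htransition]
  exact c.step n i

variable [IsFiniteMeasure μ]

lemma condExp_comp_state_succ (c : RPSChain μ γ₀) (hγ₀ : 0 < γ₀) (n : ℕ)
    {g : ℝ × ℝ × ℝ → ℝ} (hg : Measurable g)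
    (hint : Integrable (fun ω ↦ g (c.state (n + 1) ω)) μ) :
    μ[fun ω ↦ g (c.state (n + 1) ω)|c.F n] =ᵐ[μ] fun ω ↦ rpsMean γ₀ n g (c.state n ω) :=
  condExp_eq_sum_mul_of_eqOn (c.F.le n) (c.measurableSet_transition n)
    (c.pairwise_disjoint_transition hγ₀ n) (c.condExp_indicator_transition n)
    (.of_forall fun ω ↦ sum_rpsProb_of_mem_rpsSimplex (c.state_mem_rpsSimplex n ω)) hint
    (fun i ↦ ((hg.comp (continuous_rpsStep γ₀ n i).measurable).comp
      (c.measurable_state_filtration n)).stronglyMeasurable)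
    (fun _ _ hω ↦ congrArg g hω)

lemma integrable_rpsM_state (c : RPSChain μ γ₀) (n : ℕ) :
    Integrable (fun ω ↦ rpsM (c.state n ω)) μ :=
  .of_mem_Icc 0 (1 / 27) (continuous_rpsM.measurable.comp (c.measurable_state n)).aemeasurable
    (.of_forall fun ω ↦ rpsM_mem_Icc (c.state_mem_rpsSimplex n ω))

lemma supermartingale_rpsM (c : RPSChain μ γ₀) (hγ₀ : 0 < γ₀) :
    Supermartingale (fun n ω ↦ rpsM (c.state n ω)) c.F μ := by
  refine supermartingale_nat (fun n ↦ (continuous_rpsM.measurable.comp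
    (c.measurable_state_filtration n)).stronglyMeasurable) c.integrable_rpsM_state fun n ↦ ?_
  filter_upwards [c.condExp_comp_state_succ hγ₀ n continuous_rpsM.measurable
    (c.integrable_rpsM_state (n + 1))] with ω hω
  rw [hω]
  exact rpsMean_rpsM_le hγ₀ n (c.state_mem_rpsSimplex n ω)

lemma supermartingale_sq_rpsM_sub_add_inv (c : RPSChain μ γ₀) (hγ₀ : 0 < γ₀) {m : ℝ}
    (hm : m ∈ Icc (0 : ℝ) 1) :
    Supermartingale (fun n ω ↦ (rpsM (c.state n ω) - m) ^ 2 + 51 * (rpsGamma γ₀ n)⁻¹) c.F μ := by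
  have hmeas : Measurable fun q ↦ (rpsM q - m) ^ 2 :=
    ((continuous_rpsM.sub continuous_const).pow 2).measurable
  have hint (n : ℕ) : Integrable (fun ω ↦ (rpsM (c.state n ω) - m) ^ 2) μ := by
    refine .of_mem_Icc 0 1 (hmeas.comp (c.measurable_state n)).aemeasurable (.of_forall fun ω ↦ ?_)
    obtain ⟨h0, h1⟩ := rpsM_mem_Icc (c.state_mem_rpsSimplex n ω)
    refine ⟨sq_nonneg _, (sq_le_one_iff_abs_le_one _).2 (abs_le.2 ⟨?_, ?_⟩)⟩ <;>
      linarith [hm.1, hm.2]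
  refine supermartingale_nat (fun n ↦ ((hmeas.comp
    (c.measurable_state_filtration n)).add_const _).stronglyMeasurable)
    (fun n ↦ (hint n).add (integrable_const _)) fun n ↦ ?_
  filter_upwards [condExp_add (hint (n + 1)) (integrable_const (51 * (rpsGamma γ₀ (n + 1))⁻¹))
    (c.F n), c.condExp_comp_state_succ hγ₀ n hmeas (hint (n + 1))] with ω hadd hω
  refine hadd.trans_le ?_
  rw [Pi.add_apply, hω, condExp_const (c.F.le n)]
  have hsq := rpsMean_sq_rpsM_sub_le hγ₀ n (c.state_mem_rpsSimplex n ω) hm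
  have hγ := four_div_sq_le_inv_rpsGamma_sub_inv hγ₀ n
  have h204 : 204 / rpsGamma γ₀ (n + 1) ^ 2 = 51 * (4 / rpsGamma γ₀ (n + 1) ^ 2) := by ring
  linarith

lemma ae_exists_tendsto_rpsM (c : RPSChain μ γ₀) (hγ₀ : 0 < γ₀) :
    ∀ᵐ ω ∂μ, ∃ M ∈ Icc (0 : ℝ) (1 / 27),
      Tendsto (fun n ↦ rpsM (c.state n ω)) atTop (𝓝 M) := by
  have hmem (n : ℕ) (ω : Ω) := rpsM_mem_Icc (c.state_mem_rpsSimplex n ω)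
  filter_upwards [ae_exists_tendsto_of_supermartingale (c.supermartingale_rpsM hγ₀)
    fun n ↦ .of_forall fun ω ↦ (hmem n ω).1] with ω ⟨M, hM⟩
  exact ⟨M, isClosed_Icc.mem_of_tendsto hM (.of_forall fun n ↦ hmem n ω), hM⟩

lemma measure_degree_succ_eq_add_pos (c : RPSChain μ γ₀) (hγ₀ : 0 < γ₀) {n : ℕ}
    {v : ℝ × ℝ × ℝ} (hv : 0 < v.1 ∧ 0 < v.2.1 ∧ 0 < v.2.2) (h : 0 < μ {ω | c.degree n ω = v})
    (i : Fin 6) : 0 < μ {ω | c.degree (n + 1) ω = v + rpsIncr i} := by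
  have hγ := rpsGamma_pos hγ₀ n
  have hs : MeasurableSet[c.F n] {ω | c.degree n ω = v} :=
    (c.measurable_state_filtration n).const_smul (rpsGamma γ₀ n) (measurableSet_singleton v)
  have hprob : ∀ ω ∈ {ω | c.degree n ω = v},
      0 < rpsProb i (c.state n ω).1 (c.state n ω).2.1 (c.state n ω).2.2 := by
    rintro ω rfl
    obtain ⟨hx, hy, hz⟩ := hv
    exact rpsProb_pos i (pos_of_mul_pos_right hx hγ.le) (pos_of_mul_pos_right hy hγ.le)
      (pos_of_mul_pos_right hz hγ.le)
  refine (measure_inter_pos_of_condExp_indicator_pos (c.F.le n) hs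
    (c.measurableSet_transition n i) (c.condExp_indicator_transition n i) hprob h).trans_le
    (measure_mono ?_)
  rintro ω ⟨rfl, hstep : c.state (n + 1) ω = _⟩
  change rpsGamma γ₀ (n + 1) • c.state (n + 1) ω = _
  rw [hstep, rpsGamma_smul_rpsStep hγ₀, degree]

lemma measure_degree_add_eq_add_smul_pos (c : RPSChain μ γ₀) (hγ₀ : 0 < γ₀) {n : ℕ}
    {v : ℝ × ℝ × ℝ} (hv : 0 < v.1 ∧ 0 < v.2.1 ∧ 0 < v.2.2) (h : 0 < μ {ω | c.degree n ω = v})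
    (i : Fin 6) (k : ℕ) : 0 < μ {ω | c.degree (n + k) ω = v + (k : ℝ) • rpsIncr i} := by
  induction k with
  | zero => simpa using h
  | succ k ih =>
    have := c.measure_degree_succ_eq_add_pos hγ₀ (add_smul_rpsIncr_pos hv i k) ih i
    rwa [← add_assoc, Nat.cast_succ, add_smul, one_smul, ← add_assoc]

lemma exists_measure_degree_eq_pos [NeZero μ] (c : RPSChain μ γ₀) (hγ₀ : 0 < γ₀) :
    ∃ v : ℝ × ℝ × ℝ, ∀ a b d : ℕ, 0 < μ {ω | c.degree (a + b + d) ω =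
      v + (a : ℝ) • rpsIncr 0 + (b : ℝ) • rpsIncr 1 + (d : ℝ) • rpsIncr 2} := by
  obtain ⟨ω₀⟩ := μ.nonempty_of_neZero
  have hγ := rpsGamma_pos hγ₀ 0
  have hconst : {ω | c.degree 0 ω = c.degree 0 ω₀} = univ := by
    refine eq_univ_of_forall fun ω ↦ ?_
    simp only [degree, state, mem_ofPred_eq, c.init_X_const ω ω₀, c.init_Y_const ω ω₀,
      c.init_Z_const ω ω₀]
  have h0 : 0 < μ {ω | c.degree (0 : ℕ) ω = c.degree 0 ω₀} := by
    rw [hconst]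
    exact NeZero.pos _
  have hv : 0 < (c.degree 0 ω₀).1 ∧ 0 < (c.degree 0 ω₀).2.1 ∧ 0 < (c.degree 0 ω₀).2.2 :=
    ⟨mul_pos hγ (c.init_X_pos ω₀), mul_pos hγ (c.init_Y_pos ω₀), mul_pos hγ (c.init_Z_pos ω₀)⟩
  refine ⟨c.degree 0 ω₀, fun a b d ↦ ?_⟩
  have ha := c.measure_degree_add_eq_add_smul_pos hγ₀ hv h0 0 a
  have hva := add_smul_rpsIncr_pos hv 0 a
  have hb := c.measure_degree_add_eq_add_smul_pos hγ₀ hva ha 1 b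
  simpa only [zero_add] using c.measure_degree_add_eq_add_smul_pos hγ₀
    (add_smul_rpsIncr_pos hva 1 b) hb 2 d

lemma eventually_measure_state_mem_pos [NeZero μ] (c : RPSChain μ γ₀) (hγ₀ : 0 < γ₀)
    {q : ℝ × ℝ × ℝ} (hq : q ∈ rpsSimplex) {U : Set (ℝ × ℝ × ℝ)} (hU : U ∈ 𝓝 q) :
    ∀ᶠ n in atTop, 0 < μ {ω | c.state n ω ∈ U} := by
  obtain ⟨v, hv⟩ := c.exists_measure_degree_eq_pos hγ₀
  obtain ⟨a, b, d, habd, hlim⟩ := exists_nat_tendsto_inv_rpsGamma_smul γ₀ v hq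
  filter_upwards [hlim hU] with n hn
  have hpos := hv (a n) (b n) (d n)
  rw [habd] at hpos
  refine hpos.trans_le (measure_mono fun ω (hω : c.degree n ω = _) ↦ ?_)
  rwa [mem_preimage, ← hω, degree, inv_smul_smul₀ (rpsGamma_pos hγ₀ n).ne'] at hn

lemma measure_exists_mem_closedBall_tendsto_rpsM_pos [NeZero μ] (c : RPSChain μ γ₀)
    (hγ₀ : 0 < γ₀) {m δ : ℝ} (hm : m ∈ Icc (0 : ℝ) (1 / 27)) (hδ : 0 < δ) :
    0 < μ {ω | ∃ M ∈ Metric.closedBall m δ,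
      Tendsto (fun n ↦ rpsM (c.state n ω)) atTop (𝓝 M)} := by
  obtain ⟨q, hq, rfl⟩ := exists_mem_rpsSimplex_rpsM_eq hm
  have hW := c.supermartingale_sq_rpsM_sub_add_inv hγ₀ ⟨hm.1, hm.2.trans (by norm_num)⟩
  have hWnonneg (n : ℕ) (ω : Ω) :
      0 ≤ (rpsM (c.state n ω) - rpsM q) ^ 2 + 51 * (rpsGamma γ₀ n)⁻¹ := by
    have := rpsGamma_pos hγ₀ n
    positivity
  have hnear : {p | (rpsM p - rpsM q) ^ 2 < δ ^ 2 / 2} ∈ 𝓝 q :=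
    ((continuous_rpsM.sub continuous_const).pow 2).continuousAt.eventually_lt_const
      (by simpa using pow_pos hδ 2)
  have hγ : ∀ᶠ n in atTop, 51 * (rpsGamma γ₀ n)⁻¹ < δ ^ 2 / 2 :=
    ((tendsto_rpsGamma_atTop γ₀).inv_tendsto_atTop.const_mul 51).eventually_lt_const
      (by simpa using pow_pos hδ 2)
  obtain ⟨n, hn, hγn⟩ := ((c.eventually_measure_state_mem_pos hγ₀ hq hnear).and hγ).exists
  have hsmall : 0 < μ {ω | (rpsM (c.state n ω) - rpsM q) ^ 2 + 51 * (rpsGamma γ₀ n)⁻¹ < δ ^ 2} :=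
    hn.trans_le (measure_mono fun ω hω ↦ (add_lt_add hω hγn).trans_eq (add_halves _))
  refine (measure_frequently_lt_pos_of_supermartingale hW (fun n ↦ .of_forall (hWnonneg n))
    hsmall).trans_le (measure_mono_ae ?_)
  filter_upwards [c.ae_exists_tendsto_rpsM hγ₀] with ω ⟨M, _, hM⟩ hfreq
  refine ⟨M, Metric.isClosed_closedBall.mem_of_frequently_of_tendsto (hfreq.mono fun k hk ↦ ?_) hM,
    hM⟩
  have hγk := rpsGamma_pos hγ₀ k
  exact abs_le_of_sq_le_sq ((le_add_of_nonneg_right (by positivity)).trans hk.le) hδ.le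

end RPSChain

theorem rps_M_converges_full_support_general {Ω : Type*} [MeasurableSpace Ω] (μ : Measure Ω)
    [IsFiniteMeasure μ] [NeZero μ] (γ₀ : ℝ) (hγ₀ : 0 < γ₀) (c : RPSChain μ γ₀) :
    (∀ᵐ ω ∂μ, ∃ M : ℝ, M ∈ Set.Icc (0 : ℝ) (1/27) ∧
      Tendsto (fun n => c.X n ω * c.Y n ω * c.Z n ω) atTop (𝓝 M)) ∧
    (∀ a b : ℝ, 0 ≤ a → a < b → b ≤ 1/27 →
      0 < μ {ω | ∃ M ∈ Set.Ioo a b,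
        Tendsto (fun n => c.X n ω * c.Y n ω * c.Z n ω) atTop (𝓝 M)}) := by
  refine ⟨c.ae_exists_tendsto_rpsM hγ₀, fun a b ha hab hb ↦ ?_⟩
  have hball : Metric.closedBall ((a + b) / 2) ((b - a) / 4) ⊆ Ioo a b := by
    rw [Real.closedBall_eq_Icc]
    exact Icc_subset_Ioo (by linarith) (by linarith)
  refine (c.measure_exists_mem_closedBall_tendsto_rpsM_pos hγ₀ (m := (a + b) / 2)
    (δ := (b - a) / 4) ⟨by linarith, by linarith⟩ (by linarith)).trans_le (measure_mono ?_)
  rintro ω ⟨M, hM, hlim⟩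
  exact ⟨M, hball hM, hlim⟩

/-- Almost surely `M_n = X_n Y_n Z_n` converges to a limit `M ∈ [0, 1/27]`, and the law of `M`
gives positive probability to every nonempty open subinterval of `(0, 1/27)`. -/
theorem rps_M_converges_full_support
    {Ω : Type*} [MeasurableSpace Ω] (μ : Measure Ω) [IsProbabilityMeasure μ]
    (γ₀ : ℝ) (hγ₀ : 2 ≤ γ₀) (c : RPSChain μ γ₀) :
    (∀ᵐ ω ∂μ, ∃ M : ℝ, M ∈ Set.Icc (0 : ℝ) (1/27) ∧
      Tendsto (fun n => c.X n ω * c.Y n ω * c.Z n ω) atTop (𝓝 M)) ∧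
    (∀ a b : ℝ, 0 ≤ a → a < b → b ≤ 1/27 →
      0 < μ {ω | ∃ M ∈ Set.Ioo a b,
        Tendsto (fun n => c.X n ω * c.Y n ω * c.Z n ω) atTop (𝓝 M)}) :=
  rps_M_converges_full_support_general μ γ₀ (zero_lt_two.trans_le hγ₀) c
end
end

section
/- In the choose-random-visible-type chain, for every i ∈ {1,…,N}, almost surely x_i(n) → 1/N as n → ∞. -/
open MeasureTheory ProbabilityTheory Filter Set Topology Finset

noncomputable section

/-- `γ_n = γ₀ + 2 m n`. -/
def visGamma (γ₀ : ℝ) (m : ℕ) (n : ℕ) : ℝ := γ₀ + 2 * m * n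

/-- The choose-random-visible-type preferential attachment chain with `N` types where each
new vertex chooses `m` neighbours: `x n` is the vector of proportions of edge-ends of each
type, `T (n+1)` records the types of the `m` chosen neighbours of vertex `n+1`, sampled
(conditionally on `𝔉 n`) i.i.d. according to `x n`, and `τ (n+1)` is the type adopted by
vertex `n+1`, chosen uniformly at random among the types present among its neighbours. -/
structure VisChain {Ω : Type*} [MeasurableSpace Ω] (μ : Measure Ω)
    (N m : ℕ) (γ₀ : ℝ) where
  F : Filtration ℕ ‹MeasurableSpace Ω›
  x : ℕ → Fin N → Ω → ℝ
  T : ℕ → Ω → Fin m → Fin N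
  τ : ℕ → Ω → Fin N
  adapted_x : ∀ i, Adapted F fun n => x n i
  meas_T : ∀ n, Measurable[F (n + 1)] (T (n + 1))
  meas_τ : ∀ n, Measurable[F (n + 1)] (τ (n + 1))
  nonneg : ∀ n i ω, 0 ≤ x n i ω
  sum_eq_one : ∀ n ω, ∑ i, x n i ω = 1
  init_pos : ∀ i ω, 0 < x 0 i ω
  init_const : ∀ i ω ω', x 0 i ω = x 0 i ω'
  step_law : ∀ (n : ℕ) (t : Fin m → Fin N) (i : Fin N),
    μ[Set.indicator {ω | T (n + 1) ω = t ∧ τ (n + 1) ω = i} (fun _ => (1 : ℝ)) | F n]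
      =ᵐ[μ] fun ω => (∏ j, x n (t j) ω) *
        (if i ∈ Finset.univ.image t then 1 / ((Finset.univ.image t).card : ℝ) else 0)
  update : ∀ (n : ℕ) (i : Fin N) (ω : Ω),
    x (n + 1) i ω =
      (visGamma γ₀ m n * x n i ω
          + ((Finset.univ.filter fun j => T (n + 1) ω j = i).card : ℝ)
          + m * (if τ (n + 1) ω = i then (1 : ℝ) else 0)) / visGamma γ₀ m (n + 1)

/-!
Along the chain, `∑ i, -log (x i)`, corrected by the nonincreasing term
`∑ i, 2 * m / (γ_n * x i)`, is a Lyapunov function: its conditional expectation drops by at least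
`(m / γ_n) * G (x n)`, where `G x = ∑ i, (p i - x i) / x i` and `p i` is the probability that type
`i` is adopted. Writing `m * (p i - x i)` as a sum over types `j` of antisymmetric flows and
pairing each sample with the one obtained by exchanging the types `i` and `j` turns `G` into a sum
of nonnegative terms; as `m ≥ 3`, some sample contains `i` and `j` different nonzero numbers of
times, so `G` vanishes on the open simplex only at the uniform vector. Hence `∑ G (x n) / γ_n < ∞`
while `∑ 1 / γ_n = ∞`, which makes the uniform vector a cluster point, and convergence of the
Lyapunov function, whose value `∑ i, -log (x i)` singles out the uniform vector, excludes any other.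
-/

section RealLog

lemma exists_pos_log_sub_log_eq_mul {a b : ℝ} (ha : 0 < a) (hb : 0 < b) :
    ∃ c : ℝ, 0 < c ∧ Real.log a - Real.log b = c * (a - b) := by
  rcases eq_or_ne b a with rfl | hne
  · exact ⟨1, one_pos, by simp⟩
  · refine ⟨slope Real.log b a, Real.strictMonoOn_log.slope_pos hb ha hne, ?_⟩
    rw [slope_def_field, div_mul_cancel₀ _ (sub_ne_zero.2 hne.symm)]

lemma neg_log_le_inv {x : ℝ} (hx : 0 < x) : -Real.log x ≤ x⁻¹ := by
  linarith [Real.one_sub_inv_le_log_of_pos hx]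

end RealLog

section Sampling

variable {ι κ : Type*}

/-- The probability of drawing the sample `t` in independent draws from the weights `x`. -/
def sampleProb [Fintype κ] (x : ι → ℝ) (t : κ → ι) : ℝ := ∏ k, x (t k)

lemma sampleProb_pos [Fintype κ] {x : ι → ℝ} (hx : ∀ i, 0 < x i) (t : κ → ι) :
    0 < sampleProb x t :=
  Finset.prod_pos fun k _ => hx (t k)

variable [DecidableEq ι] [Fintype κ]

/-- The number of draws of the sample `t` that have type `i`. -/
def typeCount (t : κ → ι) (i : ι) : ℕ := (Finset.univ.filter fun k => t k = i).card

/-- The probability that a uniformly chosen visible type of the sample `t` is `i`. -/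
def adoptProb (t : κ → ι) (i : ι) : ℝ :=
  if i ∈ Finset.univ.image t then 1 / ((Finset.univ.image t).card : ℝ) else 0

/-- The symmetric weight with which the types `i` and `j` are compared in the sample `t`: the
inverse of the number of visible types if both are visible, and `0` otherwise. It is written as a
product so that summing over `j` only needs `∑ j, adoptProb t j = 1`. -/
def pairWeight (t : κ → ι) (i j : ι) : ℝ :=
  (Finset.univ.image t).card * adoptProb t i * adoptProb t j

lemma sum_typeCount [Fintype ι] (t : κ → ι) : ∑ i, typeCount t i = Fintype.card κ := by
  simpa [typeCount] using
    Finset.sum_card_fiberwise_eq_card_filter (Finset.univ : Finset κ) (Finset.univ : Finset ι) t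

lemma typeCount_le_card (t : κ → ι) (i : ι) : typeCount t i ≤ Fintype.card κ :=
  Finset.card_filter_le _ _

lemma typeCount_eq_zero_iff {t : κ → ι} {i : ι} :
    typeCount t i = 0 ↔ i ∉ Finset.univ.image t := by
  simp [typeCount, Finset.filter_eq_empty_iff]

lemma adoptProb_nonneg (t : κ → ι) (i : ι) : 0 ≤ adoptProb t i := by
  unfold adoptProb; positivity

lemma card_image_mul_adoptProb_mul_typeCount (t : κ → ι) (i : ι) :
    (Finset.univ.image t).card * adoptProb t i * typeCount t i = typeCount t i := by
  by_cases hi : i ∈ Finset.univ.image t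
  · have hcard : ((Finset.univ.image t).card : ℝ) ≠ 0 := by
      exact_mod_cast Finset.card_ne_zero_of_mem hi
    rw [adoptProb, if_pos hi, mul_one_div_cancel hcard, one_mul]
  · rw [typeCount_eq_zero_iff.2 hi, Nat.cast_zero, mul_zero]

lemma sum_adoptProb [Fintype ι] [Nonempty κ] (t : κ → ι) : ∑ i, adoptProb t i = 1 := by
  have hcard : ((Finset.univ.image t).card : ℝ) ≠ 0 := by
    exact_mod_cast (Finset.univ_nonempty.image t).card_ne_zero
  simp only [adoptProb, Finset.sum_ite_mem, Finset.univ_inter, Finset.sum_const, nsmul_eq_mul,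
    mul_one_div_cancel hcard]

lemma pairWeight_comm (t : κ → ι) (i j : ι) : pairWeight t i j = pairWeight t j i :=
  mul_right_comm _ _ _

lemma pairWeight_nonneg (t : κ → ι) (i j : ι) : 0 ≤ pairWeight t i j :=
  mul_nonneg (mul_nonneg (Nat.cast_nonneg _) (adoptProb_nonneg t i)) (adoptProb_nonneg t j)

lemma pairWeight_pos {t : κ → ι} {i j : ι} (hi : typeCount t i ≠ 0) (hj : typeCount t j ≠ 0) :
    0 < pairWeight t i j := by
  rw [Ne, typeCount_eq_zero_iff, not_not] at hi hj
  have hcard : (0 : ℝ) < (Finset.univ.image t).card := by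
    exact_mod_cast Finset.card_pos.2 ⟨i, hi⟩
  simp only [pairWeight, adoptProb, if_pos hi, if_pos hj]
  positivity

lemma card_mul_adoptProb_sub_typeCount [Fintype ι] [Nonempty κ] (t : κ → ι) (i : ι) :
    Fintype.card κ * adoptProb t i - typeCount t i
      = ∑ j, pairWeight t i j * ((typeCount t j : ℝ) - typeCount t i) := by
  have hsum : ∑ j, (typeCount t j : ℝ) = Fintype.card κ := by exact_mod_cast sum_typeCount t
  calc Fintype.card κ * adoptProb t i - typeCount t i
      = adoptProb t i * ∑ j, (typeCount t j : ℝ) - typeCount t i * ∑ j, adoptProb t j := by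
        rw [hsum, sum_adoptProb]; ring
    _ = ∑ j, pairWeight t i j * ((typeCount t j : ℝ) - typeCount t i) := by
        rw [Finset.mul_sum, Finset.mul_sum, ← Finset.sum_sub_distrib]
        refine Finset.sum_congr rfl fun j _ => ?_
        rw [pairWeight]
        linear_combination adoptProb t j * card_image_mul_adoptProb_mul_typeCount t i
          - adoptProb t i * card_image_mul_adoptProb_mul_typeCount t j

lemma card_image_perm_comp (σ : Equiv.Perm ι) (t : κ → ι) :
    (Finset.univ.image (σ ∘ t)).card = (Finset.univ.image t).card := by
  rw [← Finset.image_image, Finset.card_image_of_injective _ σ.injective]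

lemma typeCount_perm_comp (σ : Equiv.Perm ι) (t : κ → ι) (i : ι) :
    typeCount (σ ∘ t) (σ i) = typeCount t i := by
  simp [typeCount]

lemma adoptProb_perm_comp (σ : Equiv.Perm ι) (t : κ → ι) (i : ι) :
    adoptProb (σ ∘ t) (σ i) = adoptProb t i := by
  simp only [adoptProb, card_image_perm_comp]
  simp

lemma typeCount_swap_comp_left (t : κ → ι) (i j : ι) :
    typeCount (Equiv.swap i j ∘ t) i = typeCount t j := by
  simpa using typeCount_perm_comp (Equiv.swap i j) t j

lemma typeCount_swap_comp_right (t : κ → ι) (i j : ι) :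
    typeCount (Equiv.swap i j ∘ t) j = typeCount t i := by
  simpa using typeCount_perm_comp (Equiv.swap i j) t i

lemma pairWeight_swap_comp (t : κ → ι) (i j : ι) :
    pairWeight (Equiv.swap i j ∘ t) i j = pairWeight t i j := by
  have hi : adoptProb (Equiv.swap i j ∘ t) i = adoptProb t j := by
    simpa using adoptProb_perm_comp (Equiv.swap i j) t j
  have hj : adoptProb (Equiv.swap i j ∘ t) j = adoptProb t i := by
    simpa using adoptProb_perm_comp (Equiv.swap i j) t i
  rw [pairWeight, card_image_perm_comp, hi, hj, mul_right_comm, pairWeight]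

lemma log_sampleProb_sub_log_sampleProb_swap_comp {x : ι → ℝ} (hx : ∀ i, 0 < x i) (t : κ → ι)
    (i j : ι) :
    Real.log (sampleProb x t) - Real.log (sampleProb x (Equiv.swap i j ∘ t))
      = ((typeCount t j : ℝ) - typeCount t i) * (Real.log (x j) - Real.log (x i)) := by
  have hterm (a : ι) : Real.log (x a) - Real.log (x (Equiv.swap i j a))
      = ((if a = j then 1 else 0) - (if a = i then 1 else 0))
        * (Real.log (x j) - Real.log (x i)) := by
    rw [Equiv.swap_apply_def]
    split_ifs <;> simp_all
  simp only [sampleProb, Function.comp_apply, Real.log_prod fun _ _ => (hx _).ne']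
  rw [← Finset.sum_sub_distrib, Finset.sum_congr rfl fun k _ => hterm (t k), ← Finset.sum_mul,
    Finset.sum_sub_distrib, Finset.sum_boole, Finset.sum_boole, typeCount, typeCount]

-- Since `log` is increasing, the difference of the two sample probabilities has the sign of the
-- difference of their logarithms, which is `(c j - c i) * (log (x j) - log (x i))`.
lemma exists_pos_sampleProb_sub_swap_mul_eq {x : ι → ℝ} (hx : ∀ i, 0 < x i) (t : κ → ι) (i j : ι) :
    ∃ c : ℝ, 0 < c ∧ (sampleProb x t - sampleProb x (Equiv.swap i j ∘ t))
        * (((typeCount t j : ℝ) - typeCount t i) * ((x i)⁻¹ - (x j)⁻¹))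
      = c * (((typeCount t j : ℝ) - typeCount t i) * (x j - x i)) ^ 2 := by
  obtain ⟨a, ha, hlogP⟩ := exists_pos_log_sub_log_eq_mul (sampleProb_pos hx t)
    (sampleProb_pos hx (Equiv.swap i j ∘ t))
  obtain ⟨b, hb, hlogx⟩ := exists_pos_log_sub_log_eq_mul (hx j) (hx i)
  rw [log_sampleProb_sub_log_sampleProb_swap_comp hx, hlogx] at hlogP
  have hxi := hx i
  have hxj := hx j
  refine ⟨b / (a * (x i * x j)), by positivity, ?_⟩
  have hP : sampleProb x t - sampleProb x (Equiv.swap i j ∘ t)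
      = ((typeCount t j : ℝ) - typeCount t i) * (b * (x j - x i)) / a := by
    rw [hlogP, mul_div_cancel_left₀ _ ha.ne']
  rw [hP]
  field_simp

lemma sampleProb_sub_swap_mul_nonneg {x : ι → ℝ} (hx : ∀ i, 0 < x i) (t : κ → ι) (i j : ι) :
    0 ≤ (sampleProb x t - sampleProb x (Equiv.swap i j ∘ t))
      * (((typeCount t j : ℝ) - typeCount t i) * ((x i)⁻¹ - (x j)⁻¹)) := by
  obtain ⟨c, hc, h⟩ := exists_pos_sampleProb_sub_swap_mul_eq hx t i j
  rw [h]
  positivity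

lemma sampleProb_sub_swap_mul_pos {x : ι → ℝ} (hx : ∀ i, 0 < x i) {t : κ → ι} {i j : ι}
    (hij : x i ≠ x j) (ht : typeCount t i ≠ typeCount t j) :
    0 < (sampleProb x t - sampleProb x (Equiv.swap i j ∘ t))
      * (((typeCount t j : ℝ) - typeCount t i) * ((x i)⁻¹ - (x j)⁻¹)) := by
  obtain ⟨c, hc, h⟩ := exists_pos_sampleProb_sub_swap_mul_eq hx t i j
  have hx' : x j - x i ≠ 0 := sub_ne_zero.2 hij.symm
  have ht' : (typeCount t j : ℝ) - typeCount t i ≠ 0 := sub_ne_zero.2 (by exact_mod_cast ht.symm)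
  rw [h]
  exact mul_pos hc (sq_pos_of_ne_zero (mul_ne_zero ht' hx'))

variable [DecidableEq κ]

lemma typeCount_update_const_self (k : κ) {i j : ι} (hij : i ≠ j) :
    typeCount (Function.update (fun _ => j) k i) i = 1 := by
  simp [typeCount, Function.update_apply, hij.symm, Finset.filter_eq']

lemma typeCount_update_const_of_ne (k : κ) {i j : ι} (hij : i ≠ j) :
    typeCount (Function.update (fun _ => j) k i) j = Fintype.card κ - 1 := by
  simp [typeCount, Function.update_apply, hij, Finset.filter_ne']

variable [Fintype ι]

lemma sum_sampleProb_filter_apply_eq {x : ι → ℝ} (hx : ∑ i, x i = 1) (k : κ) (i : ι) :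
    ∑ t : κ → ι with t k = i, sampleProb x t = x i := by
  have hpi : (Finset.univ.filter fun t : κ → ι => t k = i) = Fintype.piFinset fun l =>
      if l = k then Finset.filter (· = i) Finset.univ else Finset.univ := by
    ext t
    simp only [Finset.mem_filter, Finset.mem_univ, true_and, Fintype.mem_piFinset]
    refine ⟨fun h l => ?_, fun h => by simpa using h k⟩
    split_ifs with hl <;> simp_all
  unfold sampleProb
  rw [hpi, ← Finset.prod_univ_sum _ fun _ => x,
    Fintype.prod_eq_single k fun l hl => by simp [hl, hx]]
  simp [Finset.filter_eq']

lemma sum_sampleProb_mul_typeCount {x : ι → ℝ} (hx : ∑ i, x i = 1) (i : ι) :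
    ∑ t : κ → ι, sampleProb x t * typeCount t i = Fintype.card κ * x i := by
  calc ∑ t : κ → ι, sampleProb x t * typeCount t i
      = ∑ t : κ → ι, ∑ k, if t k = i then sampleProb x t else 0 := by
        simp only [typeCount, ← Finset.sum_boole, Finset.mul_sum, mul_ite, mul_one, mul_zero]
    _ = ∑ k, ∑ t : κ → ι with t k = i, sampleProb x t := by
        rw [Finset.sum_comm]; simp only [Finset.sum_filter]
    _ = Fintype.card κ * x i := by
        simp [sum_sampleProb_filter_apply_eq hx]

variable (κ) in
/-- The probability that type `i` is adopted when the sample is drawn from the weights `x`. -/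
def visibleProb (x : ι → ℝ) (i : ι) : ℝ := ∑ t : κ → ι, sampleProb x t * adoptProb t i

variable (κ) in
/-- The total relative advantage of adopting a random visible type over copying a random draw.
It is, up to a factor, the rate at which `-∑ i, log (x i)` decreases along the chain. -/
def visibleExcess (x : ι → ℝ) : ℝ := ∑ i, (visibleProb κ x i - x i) / x i

variable (κ) in
/-- The expected net flow from type `j` to type `i` when a random visible type is adopted instead
of a random draw, up to the factor `Fintype.card κ`. -/
def pairFlow (x : ι → ℝ) (i j : ι) : ℝ :=
  ∑ t : κ → ι, sampleProb x t * (pairWeight t i j * ((typeCount t j : ℝ) - typeCount t i))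

lemma pairFlow_antisymm (x : ι → ℝ) (i j : ι) : pairFlow κ x j i = -pairFlow κ x i j := by
  simp only [pairFlow, ← Finset.sum_neg_distrib]
  refine Finset.sum_congr rfl fun t _ => ?_
  rw [pairWeight_comm]; ring

lemma card_mul_visibleProb_sub [Nonempty κ] {x : ι → ℝ} (hx : ∑ i, x i = 1) (i : ι) :
    Fintype.card κ * (visibleProb κ x i - x i) = ∑ j, pairFlow κ x i j := by
  simp only [pairFlow]
  rw [mul_sub, ← sum_sampleProb_mul_typeCount hx, visibleProb, Finset.mul_sum,
    ← Finset.sum_sub_distrib, Finset.sum_comm]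
  refine Finset.sum_congr rfl fun t _ => ?_
  rw [← Finset.mul_sum, ← card_mul_adoptProb_sub_typeCount]
  ring

lemma two_mul_card_mul_visibleExcess [Nonempty κ] {x : ι → ℝ} (hx : ∑ i, x i = 1) :
    2 * (Fintype.card κ * visibleExcess κ x)
      = ∑ i, ∑ j, pairFlow κ x i j * ((x i)⁻¹ - (x j)⁻¹) := by
  have hflow : Fintype.card κ * visibleExcess κ x = ∑ i, ∑ j, pairFlow κ x i j * (x i)⁻¹ := by
    simp only [visibleExcess, Finset.mul_sum, ← Finset.sum_mul, ← card_mul_visibleProb_sub hx]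
    exact Finset.sum_congr rfl fun i _ => by ring
  have hflow' : Fintype.card κ * visibleExcess κ x
      = ∑ i, ∑ j, pairFlow κ x i j * -(x j)⁻¹ := by
    rw [hflow, Finset.sum_comm]
    refine Finset.sum_congr rfl fun j _ => Finset.sum_congr rfl fun i _ => ?_
    rw [pairFlow_antisymm, neg_mul_comm]
  rw [two_mul]
  nth_rewrite 1 [hflow]
  rw [hflow', ← Finset.sum_add_distrib]
  simp only [← Finset.sum_add_distrib, ← mul_add, ← sub_eq_add_neg]

lemma two_mul_pairFlow_mul (x : ι → ℝ) (i j : ι) (b : ℝ) :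
    2 * (pairFlow κ x i j * b) = ∑ t : κ → ι, pairWeight t i j *
      ((sampleProb x t - sampleProb x (Equiv.swap i j ∘ t))
        * (((typeCount t j : ℝ) - typeCount t i) * b)) := by
  have hswap : pairFlow κ x i j = ∑ t : κ → ι, sampleProb x (Equiv.swap i j ∘ t)
      * (pairWeight t i j * ((typeCount t i : ℝ) - typeCount t j)) := by
    rw [pairFlow, ← Equiv.sum_comp ((Equiv.refl κ).arrowCongr (Equiv.swap i j))]
    refine Finset.sum_congr rfl fun t _ => ?_
    have hcomp : (Equiv.refl κ).arrowCongr (Equiv.swap i j) t = Equiv.swap i j ∘ t := rfl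
    rw [hcomp, pairWeight_swap_comp, typeCount_swap_comp_left, typeCount_swap_comp_right]
  rw [two_mul]
  nth_rewrite 2 [hswap]
  rw [pairFlow, ← add_mul, ← Finset.sum_add_distrib, Finset.sum_mul]
  exact Finset.sum_congr rfl fun t _ => by ring

lemma pairFlow_mul_inv_sub_inv_nonneg {x : ι → ℝ} (hx : ∀ i, 0 < x i) (i j : ι) :
    0 ≤ pairFlow κ x i j * ((x i)⁻¹ - (x j)⁻¹) := by
  refine nonneg_of_mul_nonneg_right ?_ two_pos
  rw [two_mul_pairFlow_mul]
  exact Finset.sum_nonneg fun t _ =>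
    mul_nonneg (pairWeight_nonneg t i j) (sampleProb_sub_swap_mul_nonneg hx t i j)

lemma pairFlow_mul_inv_sub_inv_pos (hκ : 3 ≤ Fintype.card κ) {x : ι → ℝ} (hx : ∀ i, 0 < x i)
    {i j : ι} (hij : x i ≠ x j) : 0 < pairFlow κ x i j * ((x i)⁻¹ - (x j)⁻¹) := by
  obtain ⟨k⟩ : Nonempty κ := Fintype.card_pos_iff.1 (by omega)
  have hne : i ≠ j := fun h => hij (congrArg x h)
  -- One draw of type `i` and all others of type `j`: the counts differ as soon as `1 ≠ card κ - 1`.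
  set t : κ → ι := Function.update (fun _ => j) k i
  have hi : typeCount t i = 1 := typeCount_update_const_self k hne
  have hj : typeCount t j = Fintype.card κ - 1 := typeCount_update_const_of_ne k hne
  refine pos_of_mul_pos_right ?_ zero_le_two
  rw [two_mul_pairFlow_mul]
  refine Finset.sum_pos' (fun t _ => mul_nonneg (pairWeight_nonneg t i j)
    (sampleProb_sub_swap_mul_nonneg hx t i j)) ⟨t, Finset.mem_univ t, ?_⟩
  exact mul_pos (pairWeight_pos (by omega) (by omega))
    (sampleProb_sub_swap_mul_pos hx hij (by omega))

lemma visibleExcess_nonneg [Nonempty κ] {x : ι → ℝ} (hx : ∀ i, 0 < x i) (hsum : ∑ i, x i = 1) :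
    0 ≤ visibleExcess κ x := by
  have hcard : (0 : ℝ) < Fintype.card κ := by exact_mod_cast Fintype.card_pos
  refine nonneg_of_mul_nonneg_right (nonneg_of_mul_nonneg_right ?_ two_pos) hcard
  rw [two_mul_card_mul_visibleExcess hsum]
  exact Finset.sum_nonneg fun i _ => Finset.sum_nonneg fun j _ =>
    pairFlow_mul_inv_sub_inv_nonneg hx i j

lemma visibleExcess_pos (hκ : 3 ≤ Fintype.card κ) {x : ι → ℝ} (hx : ∀ i, 0 < x i)
    (hsum : ∑ i, x i = 1) {i j : ι} (hij : x i ≠ x j) : 0 < visibleExcess κ x := by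
  have : Nonempty κ := Fintype.card_pos_iff.1 (by omega)
  suffices h : 0 < 2 * (Fintype.card κ * visibleExcess κ x) from
    pos_of_mul_pos_right (pos_of_mul_pos_right h zero_le_two) (Nat.cast_nonneg _)
  rw [two_mul_card_mul_visibleExcess hsum]
  have hnonneg := fun i j => pairFlow_mul_inv_sub_inv_nonneg (κ := κ) hx i j
  exact Finset.sum_pos' (fun i _ => Finset.sum_nonneg fun j _ => hnonneg i j)
    ⟨i, Finset.mem_univ i, Finset.sum_pos' (fun j _ => hnonneg i j)
      ⟨j, Finset.mem_univ j, pairFlow_mul_inv_sub_inv_pos hκ hx hij⟩⟩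

lemma continuous_visibleProb (i : ι) : Continuous fun x : ι → ℝ => visibleProb κ x i := by
  unfold visibleProb sampleProb
  fun_prop

lemma continuousOn_visibleExcess :
    ContinuousOn (visibleExcess (ι := ι) κ) {x | ∀ i, 0 < x i} := by
  unfold visibleExcess
  refine continuousOn_finsetSum _ fun i _ => ContinuousOn.div ?_ ?_ fun x hx => (hx i).ne'
  · exact ((continuous_visibleProb i).sub (continuous_apply i)).continuousOn
  · exact (continuous_apply i).continuousOn

lemma measurable_visibleExcess : Measurable (visibleExcess (ι := ι) κ) := by
  unfold visibleExcess
  have := fun i : ι => (continuous_visibleProb (κ := κ) i).measurable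
  fun_prop

end Sampling

section ClusterPoints

variable {X : Type*} [TopologicalSpace X]

lemma eq_of_mapClusterPt_of_tendsto_comp {K : Set X} {U : X → ℝ} (hU : ContinuousOn U K)
    {x : ℕ → X} (hxK : ∀ n, x n ∈ K) {L : ℝ} (hL : Tendsto (U ∘ x) atTop (𝓝 L)) {y : X}
    (hyK : y ∈ K) (hy : MapClusterPt y atTop x) : U y = L := by
  have hle : 𝓝 y ⊓ map x atTop ≤ 𝓝[K] y :=
    inf_le_inf_left _ (tendsto_principal.2 (Eventually.of_forall hxK))
  have hUy : MapClusterPt (U y) atTop (U ∘ x) := hy.tendsto_comp' ((hU y hyK).mono_left hle)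
  exact eq_of_nhds_neBot (ClusterPt.mono hUy hL).neBot

lemma mapClusterPt_of_summable_mul {K : Set X} (hK : IsCompact K) {G : X → ℝ}
    (hG : ContinuousOn G K) {u : X} (hGpos : ∀ y ∈ K, y ≠ u → 0 < G y) {a : ℕ → ℝ}
    (ha : ∀ n, 0 ≤ a n) (hdiv : ¬ Summable a) {x : ℕ → X} (hxK : ∀ n, x n ∈ K)
    (hsum : Summable fun n => a n * G (x n)) : MapClusterPt u atTop x := by
  by_contra hu
  obtain ⟨s, hs, hev⟩ : ∃ s ∈ 𝓝 u, ∀ᶠ n in atTop, x n ∉ s := by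
    simpa [mapClusterPt_iff_frequently] using hu
  have hev' : ∀ᶠ n in atTop, x n ∈ K \ interior s :=
    hev.mono fun n hn => ⟨hxK n, fun h => hn (interior_subset h)⟩
  obtain ⟨n₀, hn₀⟩ := hev'.exists
  obtain ⟨y, hy, hmin⟩ := (hK.diff isOpen_interior).exists_isMinOn ⟨_, hn₀⟩
    (hG.mono Set.sdiff_subset)
  have hGy : 0 < G y :=
    hGpos y hy.1 fun h => hy.2 (h ▸ mem_interior_iff_mem_nhds.2 hs)
  refine hdiv ((summable_mul_right_iff hGy.ne').1 ?_)
  refine Summable.of_norm_bounded_eventually_nat hsum (hev'.mono fun n hn => ?_)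
  rw [Real.norm_of_nonneg (mul_nonneg (ha n) hGy.le)]
  exact mul_le_mul_of_nonneg_left (hmin hn) (ha n)

lemma tendsto_of_summable_mul_of_tendsto_comp [T2Space X] {K : Set X} (hK : IsCompact K)
    {U G : X → ℝ} (hU : ContinuousOn U K) (hG : ContinuousOn G K) {u : X}
    (hGpos : ∀ y ∈ K, y ≠ u → 0 < G y) (hUinj : ∀ y ∈ K, U y = U u → y = u) {a : ℕ → ℝ}
    (ha : ∀ n, 0 ≤ a n) (hdiv : ¬ Summable a) {x : ℕ → X} (hxK : ∀ n, x n ∈ K)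
    (hsum : Summable fun n => a n * G (x n)) {L : ℝ} (hL : Tendsto (U ∘ x) atTop (𝓝 L)) :
    Tendsto x atTop (𝓝 u) := by
  have hu : MapClusterPt u atTop x := mapClusterPt_of_summable_mul hK hG hGpos ha hdiv hxK hsum
  have huK : u ∈ K := hK.isClosed.mem_of_mapClusterPt hu (Eventually.of_forall hxK)
  have hUL {y : X} (hyK : y ∈ K) (hy : MapClusterPt y atTop x) : U y = L :=
    eq_of_mapClusterPt_of_tendsto_comp hU hxK hL hyK hy
  exact hK.tendsto_nhds_of_unique_mapClusterPt (Eventually.of_forall hxK) fun y hyK hy =>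
    hUinj y hyK ((hUL hyK hy).trans (hUL huK hu).symm)

end ClusterPoints

section Simplex

variable {ι κ : Type*} [Fintype ι]

lemma eq_inv_card_of_forall_eq {y : ι → ℝ} (hsum : ∑ i, y i = 1) (h : ∀ i j, y i = y j) :
    y = fun _ => (Fintype.card ι : ℝ)⁻¹ := by
  funext i
  rw [Finset.sum_congr rfl fun j _ => h j i] at hsum
  exact eq_inv_of_mul_eq_one_right (by simpa using hsum)

lemma eq_inv_card_of_sum_neg_log_eq {y : ι → ℝ} (hy : ∀ i, 0 < y i) (hsum : ∑ i, y i = 1)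
    (hlog : ∑ i, -Real.log (y i) = ∑ _i : ι, -Real.log (Fintype.card ι : ℝ)⁻¹) :
    y = fun _ => (Fintype.card ι : ℝ)⁻¹ := by
  funext i
  have : Nonempty ι := ⟨i⟩
  have hcard : (Fintype.card ι : ℝ) ≠ 0 := by exact_mod_cast Fintype.card_ne_zero
  have hmean : ∑ i, (Fintype.card ι : ℝ)⁻¹ • y i = (Fintype.card ι : ℝ)⁻¹ := by
    simp only [smul_eq_mul, ← Finset.mul_sum, hsum, mul_one]
  have hJensen : Real.log (∑ i, (Fintype.card ι : ℝ)⁻¹ • y i)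
      = ∑ i, (Fintype.card ι : ℝ)⁻¹ • Real.log (y i) := by
    simp only [Finset.sum_neg_distrib, Finset.sum_const, Finset.card_univ, nsmul_eq_mul] at hlog
    rw [hmean]
    simp only [smul_eq_mul, ← Finset.mul_sum, neg_injective hlog, inv_mul_cancel_left₀ hcard]
  exact ((strictConcaveOn_log_Ioi.map_sum_eq_iff (fun _ _ => by positivity) (by simp [hcard])
    fun i _ => hy i).1 hJensen i (Finset.mem_univ i)).trans hmean

lemma le_one_of_sum_eq_one {y : ι → ℝ} (hy : ∀ i, 0 ≤ y i) (hsum : ∑ i, y i = 1) (i : ι) :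
    y i ≤ 1 :=
  hsum ▸ Finset.single_le_sum (fun j _ => hy j) (Finset.mem_univ i)

lemma exists_pos_forall_le_of_tendsto_sum_neg_log {x : ℕ → ι → ℝ} (hx : ∀ n i, 0 < x n i)
    (hx1 : ∀ n i, x n i ≤ 1) {L : ℝ}
    (hL : Tendsto (fun n => ∑ i, -Real.log (x n i)) atTop (𝓝 L)) :
    ∃ δ : ℝ, 0 < δ ∧ ∀ n i, δ ≤ x n i := by
  obtain ⟨B, hB⟩ := hL.bddAbove_range
  refine ⟨Real.exp (-B), Real.exp_pos _, fun n i => ?_⟩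
  have hi : -Real.log (x n i) ≤ ∑ j, -Real.log (x n j) :=
    Finset.single_le_sum (f := fun j => -Real.log (x n j))
      (fun j _ => neg_nonneg.2 (Real.log_nonpos (hx n j).le (hx1 n j))) (Finset.mem_univ i)
  have hBn : ∑ j, -Real.log (x n j) ≤ B := hB ⟨n, rfl⟩
  rw [← Real.le_log_iff_exp_le (hx n i)]
  linarith

lemma tendsto_inv_card_of_summable_mul_visibleExcess [DecidableEq ι] [Fintype κ] [DecidableEq κ]
    (hκ : 3 ≤ Fintype.card κ) {a : ℕ → ℝ} (ha : ∀ n, 0 ≤ a n) (hdiv : ¬ Summable a)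
    {x : ℕ → ι → ℝ} (hx : ∀ n i, 0 < x n i) (hsum : ∀ n, ∑ i, x n i = 1)
    (hexcess : Summable fun n => a n * visibleExcess κ (x n)) {L : ℝ}
    (hL : Tendsto (fun n => ∑ i, -Real.log (x n i)) atTop (𝓝 L)) :
    Tendsto x atTop (𝓝 fun _ => (Fintype.card ι : ℝ)⁻¹) := by
  have hx1 (n : ℕ) (i : ι) : x n i ≤ 1 := le_one_of_sum_eq_one (fun j => (hx n j).le) (hsum n) i
  obtain ⟨δ, hδ, hδx⟩ := exists_pos_forall_le_of_tendsto_sum_neg_log hx hx1 hL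
  set K : Set (ι → ℝ) := Set.Icc (fun _ => δ) (fun _ => 1) ∩ {y | ∑ i, y i = 1}
  have hK : IsCompact K := isCompact_Icc.inter_right (isClosed_eq (by fun_prop) (by fun_prop))
  have hKpos (y : ι → ℝ) (hy : y ∈ K) (i : ι) : 0 < y i := hδ.trans_le (hy.1.1 i)
  have hU : ContinuousOn (fun y : ι → ℝ => ∑ i, -Real.log (y i)) K :=
    continuousOn_finsetSum _ fun i _ =>
      ((continuous_apply i).continuousOn.log fun y hy => (hKpos y hy i).ne').neg
  have hGpos (y : ι → ℝ) (hy : y ∈ K) (hne : y ≠ fun _ => (Fintype.card ι : ℝ)⁻¹) :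
      0 < visibleExcess κ y := by
    contrapose! hne
    refine eq_inv_card_of_forall_eq hy.2 fun i j => ?_
    contrapose! hne
    exact visibleExcess_pos hκ (hKpos y hy) hy.2 hne
  exact tendsto_of_summable_mul_of_tendsto_comp hK hU (continuousOn_visibleExcess.mono hKpos) hGpos
    (fun y hy => eq_inv_card_of_sum_neg_log_eq (hKpos y hy) hy.2) ha hdiv
    (fun n => ⟨⟨hδx n, hx1 n⟩, hsum n⟩) hexcess hL

end Simplex

section RobbinsSiegmund

variable {Ω : Type*} {m₀ : MeasurableSpace Ω} {μ : Measure Ω} {ℱ : Filtration ℕ m₀}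

lemma ae_exists_tendsto_of_supermartingale_of_nonneg [IsFiniteMeasure μ] {M : ℕ → Ω → ℝ}
    (hM : Supermartingale M ℱ μ) (hnonneg : ∀ n ω, 0 ≤ M n ω) :
    ∀ᵐ ω ∂μ, ∃ l, Tendsto (fun n => M n ω) atTop (𝓝 l) := by
  have hbdd (n : ℕ) : eLpNorm ((-M) n) 1 μ ≤ (∫ ω, M 0 ω ∂μ).toNNReal := by
    have hle : ∫ ω, M n ω ∂μ ≤ ∫ ω, M 0 ω ∂μ := by
      simpa using hM.setIntegral_le (Nat.zero_le n) MeasurableSet.univ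
    rw [Pi.neg_apply, eLpNorm_neg, eLpNorm_one_eq_lintegral_enorm,
      ← ofReal_integral_norm_eq_lintegral_enorm (hM.integrable n)]
    refine ENNReal.ofReal_le_ofReal (le_of_eq_of_le ?_ hle)
    exact integral_congr_ae (Eventually.of_forall fun ω => Real.norm_of_nonneg (hnonneg n ω))
  filter_upwards [hM.neg.exists_ae_tendsto_of_bdd hbdd] with ω ⟨l, hl⟩
  exact ⟨-l, by simpa using hl.neg⟩

lemma integrable_of_condExp_le_sub {m : MeasurableSpace Ω} (hm : m ≤ m₀) {V V' a : Ω → ℝ}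
    (hVint : Integrable V μ) (hV' : 0 ≤ V') (ha : StronglyMeasurable[m] a) (ha0 : 0 ≤ a)
    (hstep : μ[V' | m] ≤ᵐ[μ] V - a) : Integrable a μ := by
  refine hVint.mono' (ha.mono hm).aestronglyMeasurable ?_
  filter_upwards [hstep, condExp_nonneg (m := m) (Eventually.of_forall hV')] with ω hle hnonneg
  simp only [Pi.sub_apply, Pi.zero_apply] at hle hnonneg
  rw [Real.norm_of_nonneg (ha0 ω)]
  linarith

lemma supermartingale_add_sum_range [IsFiniteMeasure μ] {V a : ℕ → Ω → ℝ}
    (hV : StronglyAdapted ℱ V) (ha : StronglyAdapted ℱ a) (hVint : ∀ n, Integrable (V n) μ)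
    (haint : ∀ n, Integrable (a n) μ) (hstep : ∀ n, μ[V (n + 1) | ℱ n] ≤ᵐ[μ] V n - a n) :
    Supermartingale (fun n => V n + ∑ k ∈ Finset.range n, a k) ℱ μ := by
  have hsum_meas (n j : ℕ) (hj : ∀ k < j, k ≤ n) :
      StronglyMeasurable[ℱ n] (∑ k ∈ Finset.range j, a k) :=
    Finset.stronglyMeasurable_sum _ fun k hk => (ha k).mono (ℱ.mono (hj k (Finset.mem_range.1 hk)))
  have hsum_int (n : ℕ) : Integrable (∑ k ∈ Finset.range n, a k) μ :=
    integrable_finsetSum' _ fun k _ => haint k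
  refine supermartingale_nat (fun n => (hV n).add (hsum_meas n n fun _ => le_of_lt))
    (fun n => (hVint n).add (hsum_int n)) fun n => ?_
  filter_upwards [condExp_add (hVint (n + 1)) (hsum_int (n + 1)) (ℱ n), hstep n] with ω hadd hle
  rw [condExp_of_stronglyMeasurable (ℱ.le n) (hsum_meas n (n + 1) fun _ => Nat.lt_succ_iff.1)
    (hsum_int (n + 1))] at hadd
  rw [hadd]
  simp only [Finset.sum_range_succ, Pi.add_apply, Pi.sub_apply] at hle ⊢
  linarith

lemma ae_summable_and_exists_tendsto_of_condExp_le_sub [IsFiniteMeasure μ] {V a : ℕ → Ω → ℝ}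
    (hV : StronglyAdapted ℱ V) (ha : StronglyAdapted ℱ a) (hVint : ∀ n, Integrable (V n) μ)
    (hV0 : ∀ n ω, 0 ≤ V n ω) (ha0 : ∀ n ω, 0 ≤ a n ω)
    (hstep : ∀ n, μ[V (n + 1) | ℱ n] ≤ᵐ[μ] V n - a n) :
    ∀ᵐ ω ∂μ, (Summable fun n => a n ω) ∧ ∃ l, Tendsto (fun n => V n ω) atTop (𝓝 l) := by
  have haint (n : ℕ) : Integrable (a n) μ :=
    integrable_of_condExp_le_sub (ℱ.le n) (hVint n) (hV0 (n + 1)) (ha n) (ha0 n) (hstep n)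
  have hsum0 (n : ℕ) (ω : Ω) : 0 ≤ (V n + ∑ k ∈ Finset.range n, a k) ω := by
    simpa using add_nonneg (hV0 n ω) (Finset.sum_nonneg fun k _ => ha0 k ω)
  filter_upwards [ae_exists_tendsto_of_supermartingale_of_nonneg
    (supermartingale_add_sum_range hV ha hVint haint hstep) hsum0] with ω ⟨l, hl⟩
  simp only [Pi.add_apply, Finset.sum_apply] at hl
  obtain ⟨B, hB⟩ := hl.bddAbove_range
  have hsum : Summable fun n => a n ω := by
    refine summable_of_sum_range_le (c := B) (fun n => ha0 n ω) fun n => ?_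
    have hBn : V n ω + ∑ k ∈ Finset.range n, a k ω ≤ B := hB ⟨n, rfl⟩
    linarith [hV0 n ω]
  exact ⟨hsum, l - ∑' n, a n ω, (hl.sub hsum.hasSum.tendsto_sum_nat).congr fun n => by ring⟩

end RobbinsSiegmund

section Normalization

variable {γ₀ : ℝ} {m : ℕ}

lemma visGamma_pos (hγ₀ : 0 < γ₀) (n : ℕ) : 0 < visGamma γ₀ m n := by
  unfold visGamma
  positivity

lemma visGamma_succ (n : ℕ) : visGamma γ₀ m (n + 1) = visGamma γ₀ m n + 2 * m := by
  unfold visGamma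
  push_cast
  ring

lemma log_visGamma_succ_le (hγ₀ : 0 < γ₀) (n : ℕ) :
    Real.log (visGamma γ₀ m (n + 1)) ≤ Real.log (visGamma γ₀ m n) + 2 * m / visGamma γ₀ m n := by
  have hγ : 0 < visGamma γ₀ m n := visGamma_pos hγ₀ n
  have hratio : visGamma γ₀ m (n + 1) / visGamma γ₀ m n = 2 * m / visGamma γ₀ m n + 1 := by
    rw [visGamma_succ, add_div, div_self hγ.ne', add_comm]
  have hlog := Real.log_le_sub_one_of_pos (div_pos (visGamma_pos (m := m) hγ₀ (n + 1)) hγ)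
  rw [Real.log_div (visGamma_pos hγ₀ _).ne' hγ.ne', hratio] at hlog
  linarith

lemma not_summable_const_div_visGamma (hγ₀ : 0 < γ₀) (hm : 0 < m) :
    ¬ Summable fun n => (m : ℝ) / visGamma γ₀ m n := by
  intro h
  have hm' : (0 : ℝ) < m := by exact_mod_cast hm
  refine Real.not_summable_one_div_natCast ((summable_nat_add_iff 1).1 ?_)
  refine Summable.of_nonneg_of_le (fun n => by positivity) (fun n => ?_)
    (h.mul_left ((γ₀ + 2 * m) / m))
  rw [div_mul_div_comm, mul_comm _ (m : ℝ), mul_div_mul_left _ _ hm'.ne',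
    div_le_div_iff₀ (by positivity) (visGamma_pos hγ₀ n), visGamma]
  have hn : 0 ≤ γ₀ * n := by positivity
  push_cast
  linarith

end Normalization

lemma neg_log_add_le {z d b : ℝ} (hz : 0 < z) (hd : 0 ≤ d) (hdb : d ≤ b) :
    -Real.log (z + d) + b / (z + d) ≤ -Real.log z + b / z - d / z := by
  have hzd : 0 < z + d := by positivity
  have hlog := Real.one_sub_inv_le_log_of_pos (div_pos hzd hz)
  rw [Real.log_div hzd.ne' hz.ne', inv_div] at hlog
  have hdiff : b / z - b / (z + d) - (d / z - (1 - z / (z + d)))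
      = d * (b - d) / (z * (z + d)) := by
    field_simp
    ring
  have hnonneg : 0 ≤ d * (b - d) / (z * (z + d)) :=
    div_nonneg (mul_nonneg hd (sub_nonneg.2 hdb)) (by positivity)
  linarith

namespace VisChain

variable {Ω : Type*} [MeasurableSpace Ω] {μ : Measure Ω} {N m : ℕ} {γ₀ : ℝ}
  (c : VisChain μ N m γ₀)

/-- The vector of proportions at time `n`, as a random element of `Fin N → ℝ`. -/
def proportions (n : ℕ) (ω : Ω) : Fin N → ℝ := fun i => c.x n i ω

/-- The number of edge-ends of type `i` created in step `n + 1`. -/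
def weightGain (n : ℕ) (i : Fin N) (ω : Ω) : ℝ :=
  typeCount (c.T (n + 1) ω) i + m * if c.τ (n + 1) ω = i then 1 else 0

/-- The contribution of type `i` to the Lyapunov function. The second summand, which decreases in
`n`, absorbs the second-order terms of the logarithm. -/
def typePotential (n : ℕ) (i : Fin N) (ω : Ω) : ℝ :=
  -Real.log (c.x n i ω) + 2 * m / (visGamma γ₀ m n * c.x n i ω)

/-- The Lyapunov function of the chain. -/
def potential (n : ℕ) (ω : Ω) : ℝ := ∑ i, c.typePotential n i ω

lemma weightGain_nonneg (n : ℕ) (i : Fin N) (ω : Ω) : 0 ≤ c.weightGain n i ω := by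
  unfold weightGain
  positivity

lemma weightGain_le (n : ℕ) (i : Fin N) (ω : Ω) : c.weightGain n i ω ≤ 2 * m := by
  have hcount : (typeCount (c.T (n + 1) ω) i : ℝ) ≤ m := by
    exact_mod_cast (typeCount_le_card _ _).trans_eq (Fintype.card_fin m)
  have hadopt : (m : ℝ) * (if c.τ (n + 1) ω = i then 1 else 0) ≤ m :=
    mul_le_of_le_one_right (Nat.cast_nonneg m) (by split_ifs <;> norm_num)
  unfold weightGain
  linarith

lemma x_le_one (n : ℕ) (i : Fin N) (ω : Ω) : c.x n i ω ≤ 1 :=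
  le_one_of_sum_eq_one (fun j => c.nonneg n j ω) (c.sum_eq_one n ω) i

lemma visGamma_succ_mul_x (hγ₀ : 0 < γ₀) (n : ℕ) (i : Fin N) (ω : Ω) :
    visGamma γ₀ m (n + 1) * c.x (n + 1) i ω
      = visGamma γ₀ m n * c.x n i ω + c.weightGain n i ω := by
  rw [c.update, mul_div_cancel₀ _ (visGamma_pos hγ₀ _).ne', add_assoc]
  rfl

lemma monotone_visGamma_mul_x (hγ₀ : 0 < γ₀) (i : Fin N) (ω : Ω) :
    Monotone fun n => visGamma γ₀ m n * c.x n i ω := by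
  refine monotone_nat_of_le_succ fun n => ?_
  rw [visGamma_succ_mul_x c hγ₀]
  exact le_add_of_nonneg_right (c.weightGain_nonneg n i ω)

lemma visGamma_mul_x_pos (hγ₀ : 0 < γ₀) (n : ℕ) (i : Fin N) (ω : Ω) :
    0 < visGamma γ₀ m n * c.x n i ω :=
  (mul_pos (visGamma_pos hγ₀ 0) (c.init_pos i ω)).trans_le
    (c.monotone_visGamma_mul_x hγ₀ i ω (Nat.zero_le n))

lemma x_pos (hγ₀ : 0 < γ₀) (n : ℕ) (i : Fin N) (ω : Ω) : 0 < c.x n i ω :=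
  pos_of_mul_pos_right (c.visGamma_mul_x_pos hγ₀ n i ω) (visGamma_pos hγ₀ n).le

lemma exists_norm_inv_visGamma_mul_x_le (hγ₀ : 0 < γ₀) (i : Fin N) :
    ∃ C : ℝ, ∀ n ω, ‖(visGamma γ₀ m n * c.x n i ω)⁻¹‖ ≤ C := by
  rcases isEmpty_or_nonempty Ω with hΩ | ⟨⟨ω₀⟩⟩
  · exact ⟨0, fun n ω => hΩ.elim ω⟩
  · refine ⟨(visGamma γ₀ m 0 * c.x 0 i ω₀)⁻¹, fun n ω => ?_⟩
    rw [c.init_const i ω₀ ω, Real.norm_of_nonneg (inv_nonneg.2 (c.visGamma_mul_x_pos hγ₀ n i ω).le)]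
    exact inv_anti₀ (c.visGamma_mul_x_pos hγ₀ 0 i ω)
      (c.monotone_visGamma_mul_x hγ₀ i ω (Nat.zero_le n))

lemma typePotential_succ_le (hγ₀ : 0 < γ₀) (n : ℕ) (i : Fin N) (ω : Ω) :
    c.typePotential (n + 1) i ω ≤ c.typePotential n i ω + 2 * m / visGamma γ₀ m n
      - (visGamma γ₀ m n * c.x n i ω)⁻¹ * c.weightGain n i ω := by
  have hstep := neg_log_add_le (c.visGamma_mul_x_pos hγ₀ n i ω) (c.weightGain_nonneg n i ω)
    (c.weightGain_le n i ω)
  rw [← visGamma_succ_mul_x c hγ₀,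
    Real.log_mul (visGamma_pos hγ₀ _).ne' (c.x_pos hγ₀ _ i ω).ne',
    Real.log_mul (visGamma_pos hγ₀ _).ne' (c.x_pos hγ₀ _ i ω).ne',
    div_eq_inv_mul (c.weightGain n i ω)] at hstep
  have hγ := log_visGamma_succ_le (m := m) hγ₀ n
  unfold typePotential
  linarith

lemma typePotential_nonneg (hγ₀ : 0 < γ₀) (n : ℕ) (i : Fin N) (ω : Ω) :
    0 ≤ c.typePotential n i ω := by
  have hlog := Real.log_nonpos (c.nonneg n i ω) (c.x_le_one n i ω)
  have hpos := c.visGamma_mul_x_pos hγ₀ n i ω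
  exact add_nonneg (neg_nonneg.2 hlog) (by positivity)

lemma measurable_proportions (n : ℕ) : Measurable[c.F n] (c.proportions n) :=
  @measurable_pi_lambda _ _ _ (c.F n) _ _ fun i => c.adapted_x i n

lemma measurable_typePotential (n : ℕ) (i : Fin N) : Measurable[c.F n] (c.typePotential n i) := by
  have hφ : Measurable fun y : ℝ => -Real.log y + 2 * m / (visGamma γ₀ m n * y) := by fun_prop
  exact hφ.comp (c.adapted_x i n)

lemma measurable_comp_sample (n : ℕ) (g : (Fin m → Fin N) → Fin N → ℝ) :
    Measurable fun ω => g (c.T (n + 1) ω) (c.τ (n + 1) ω) :=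
  (measurable_of_finite g.uncurry).comp
    (((c.meas_T n).mono (c.F.le _) le_rfl).prodMk ((c.meas_τ n).mono (c.F.le _) le_rfl))

lemma measurable_weightGain (n : ℕ) (i : Fin N) : Measurable (c.weightGain n i) :=
  c.measurable_comp_sample n fun t a => typeCount t i + m * if a = i then 1 else 0

lemma measurable_inv_visGamma_mul_x (n : ℕ) (i : Fin N) :
    Measurable[c.F n] fun ω => (visGamma γ₀ m n * c.x n i ω)⁻¹ := by
  have hφ : Measurable fun y : ℝ => (visGamma γ₀ m n * y)⁻¹ := by fun_prop
  exact hφ.comp (c.adapted_x i n)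

section CondExp

variable [IsFiniteMeasure μ]

lemma integrable_typePotential (hγ₀ : 0 < γ₀) (n : ℕ) (i : Fin N) :
    Integrable (c.typePotential n i) μ := by
  obtain ⟨C, hC⟩ := c.exists_norm_inv_visGamma_mul_x_le hγ₀ i
  have hC' (ω : Ω) : (visGamma γ₀ m n * c.x n i ω)⁻¹ ≤ C := (le_abs_self _).trans (hC n ω)
  refine Integrable.of_bound
    ((c.measurable_typePotential n i).mono (c.F.le n) le_rfl).aestronglyMeasurable
    (visGamma γ₀ m n * C + 2 * m * C) (Eventually.of_forall fun ω => ?_)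
  have hγ : 0 < visGamma γ₀ m n := visGamma_pos hγ₀ n
  have hlog : -Real.log (c.x n i ω) ≤ visGamma γ₀ m n * C :=
    calc -Real.log (c.x n i ω) ≤ (c.x n i ω)⁻¹ := neg_log_le_inv (c.x_pos hγ₀ n i ω)
      _ = visGamma γ₀ m n * (visGamma γ₀ m n * c.x n i ω)⁻¹ := by
        rw [mul_inv, mul_inv_cancel_left₀ hγ.ne']
      _ ≤ visGamma γ₀ m n * C := mul_le_mul_of_nonneg_left (hC' ω) hγ.le
  rw [Real.norm_of_nonneg (c.typePotential_nonneg hγ₀ n i ω), typePotential, div_eq_mul_inv]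
  exact add_le_add hlog (mul_le_mul_of_nonneg_left (hC' ω) (by positivity))

lemma integrable_weightGain (n : ℕ) (i : Fin N) : Integrable (c.weightGain n i) μ :=
  Integrable.of_bound (c.measurable_weightGain n i).aestronglyMeasurable (2 * m)
    (Eventually.of_forall fun ω => by
      rw [Real.norm_of_nonneg (c.weightGain_nonneg n i ω)]
      exact c.weightGain_le n i ω)

lemma integrable_inv_mul_weightGain (hγ₀ : 0 < γ₀) (n : ℕ) (i : Fin N) :
    Integrable (fun ω => (visGamma γ₀ m n * c.x n i ω)⁻¹ * c.weightGain n i ω) μ := by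
  obtain ⟨C, hC⟩ := c.exists_norm_inv_visGamma_mul_x_le hγ₀ i
  exact (c.integrable_weightGain n i).bdd_mul
    ((c.measurable_inv_visGamma_mul_x n i).mono (c.F.le n) le_rfl).aestronglyMeasurable
    (Eventually.of_forall (hC n))

lemma condExp_comp_sample (n : ℕ) (g : (Fin m → Fin N) → Fin N → ℝ) :
    μ[fun ω => g (c.T (n + 1) ω) (c.τ (n + 1) ω) | c.F n] =ᵐ[μ] fun ω =>
      ∑ t, ∑ a, g t a * (sampleProb (c.proportions n ω) t * adoptProb t a) := by
  set E : (Fin m → Fin N) × Fin N → Ω → ℝ := fun p =>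
    Set.indicator {ω | c.T (n + 1) ω = p.1 ∧ c.τ (n + 1) ω = p.2} fun _ => 1
  have hE (p : (Fin m → Fin N) × Fin N) : Integrable (E p) μ := by
    have hT : MeasurableSet {ω | c.T (n + 1) ω = p.1} :=
      (c.meas_T n).mono (c.F.le _) le_rfl (measurableSet_singleton p.1)
    have hτ : MeasurableSet {ω | c.τ (n + 1) ω = p.2} :=
      (c.meas_τ n).mono (c.F.le _) le_rfl (measurableSet_singleton p.2)
    exact (integrable_const 1).indicator (hT.inter hτ)
  have hdecomp : (fun ω => g (c.T (n + 1) ω) (c.τ (n + 1) ω)) = ∑ p, g p.1 p.2 • E p := by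
    funext ω
    simp [E, Set.indicator_apply, Fintype.sum_prod_type, ite_and]
  have hlaw (p : (Fin m → Fin N) × Fin N) : μ[g p.1 p.2 • E p | c.F n] =ᵐ[μ] fun ω =>
      g p.1 p.2 * (sampleProb (c.proportions n ω) p.1 * adoptProb p.1 p.2) := by
    filter_upwards [condExp_smul (μ := μ) (g p.1 p.2) (E p) (c.F n), c.step_law n p.1 p.2]
      with ω hsmul hstep
    rw [hsmul, Pi.smul_apply, hstep, smul_eq_mul]
    rfl
  rw [hdecomp]
  filter_upwards [condExp_finsetSum (s := Finset.univ) (fun p _ => (hE p).smul (g p.1 p.2)) (c.F n),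
    ae_all_iff.2 hlaw] with ω hsumω hlawω
  rw [hsumω, Finset.sum_apply]
  simp only [hlawω, Fintype.sum_prod_type]

lemma condExp_weightGain (hm : 0 < m) (n : ℕ) (i : Fin N) :
    μ[c.weightGain n i | c.F n] =ᵐ[μ] fun ω =>
      m * (c.x n i ω + visibleProb (Fin m) (c.proportions n ω) i) := by
  have : NeZero m := ⟨hm.ne'⟩
  refine (c.condExp_comp_sample n fun t a => typeCount t i + m * if a = i then 1 else 0).trans
    (Eventually.of_forall fun ω => ?_)
  have hadopt (t : Fin m → Fin N) : ∑ a, ((typeCount t i : ℝ) + m * if a = i then 1 else 0)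
        * (sampleProb (c.proportions n ω) t * adoptProb t a)
      = sampleProb (c.proportions n ω) t * typeCount t i
        + m * (sampleProb (c.proportions n ω) t * adoptProb t i) := by
    simp only [add_mul, Finset.sum_add_distrib, ← Finset.mul_sum, sum_adoptProb, mul_ite, ite_mul,
      mul_zero, mul_one, zero_mul, Finset.sum_ite_eq', Finset.mem_univ, if_true]
    ring
  have hcount := sum_sampleProb_mul_typeCount (κ := Fin m) (c.sum_eq_one n ω) i
  rw [Fintype.card_fin] at hcount
  simp only [hadopt, Finset.sum_add_distrib, ← Finset.mul_sum]
  rw [mul_add, ← hcount]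
  rfl

lemma condExp_inv_mul_weightGain (hm : 0 < m) (hγ₀ : 0 < γ₀) (n : ℕ) (i : Fin N) :
    μ[fun ω => (visGamma γ₀ m n * c.x n i ω)⁻¹ * c.weightGain n i ω | c.F n] =ᵐ[μ] fun ω =>
      2 * m / visGamma γ₀ m n + m / visGamma γ₀ m n
        * ((visibleProb (Fin m) (c.proportions n ω) i - c.x n i ω) / c.x n i ω) := by
  obtain ⟨C, hC⟩ := c.exists_norm_inv_visGamma_mul_x_le hγ₀ i
  filter_upwards [condExp_stronglyMeasurable_mul_of_bound (c.F.le n)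
    (c.measurable_inv_visGamma_mul_x n i).stronglyMeasurable (c.integrable_weightGain n i) C
      (Eventually.of_forall (hC n)),
    c.condExp_weightGain hm n i] with ω hpull hgain
  have hγ := (visGamma_pos (m := m) hγ₀ n).ne'
  have hx := (c.x_pos hγ₀ n i ω).ne'
  refine hpull.trans ?_
  rw [Pi.mul_apply, hgain]
  field_simp
  ring

lemma condExp_typePotential_succ_le (hm : 0 < m) (hγ₀ : 0 < γ₀) (n : ℕ) (i : Fin N) :
    μ[c.typePotential (n + 1) i | c.F n] ≤ᵐ[μ] fun ω => c.typePotential n i ω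
      - m / visGamma γ₀ m n
        * ((visibleProb (Fin m) (c.proportions n ω) i - c.x n i ω) / c.x n i ω) := by
  set A : Ω → ℝ := fun ω => c.typePotential n i ω + 2 * m / visGamma γ₀ m n
  set B : Ω → ℝ := fun ω => (visGamma γ₀ m n * c.x n i ω)⁻¹ * c.weightGain n i ω
  have hA : Integrable A μ := (c.integrable_typePotential hγ₀ n i).add (integrable_const _)
  have hAmeas : StronglyMeasurable[c.F n] A :=
    ((c.measurable_typePotential n i).add_const _).stronglyMeasurable
  have hB : Integrable B μ := c.integrable_inv_mul_weightGain hγ₀ n i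
  filter_upwards [condExp_mono (m := c.F n) (c.integrable_typePotential hγ₀ (n + 1) i) (hA.sub hB)
    (Eventually.of_forall fun ω => c.typePotential_succ_le hγ₀ n i ω),
    condExp_sub hA hB (c.F n), c.condExp_inv_mul_weightGain hm hγ₀ n i] with ω hmono hsub hBω
  rw [hsub, Pi.sub_apply, condExp_of_stronglyMeasurable (c.F.le n) hAmeas hA, hBω] at hmono
  simp only [A] at hmono
  linarith

lemma condExp_potential_succ_le (hm : 0 < m) (hγ₀ : 0 < γ₀) (n : ℕ) :
    μ[c.potential (n + 1) | c.F n] ≤ᵐ[μ] fun ω => c.potential n ω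
      - m / visGamma γ₀ m n * visibleExcess (Fin m) (c.proportions n ω) := by
  have hsum : c.potential (n + 1) = ∑ i, c.typePotential (n + 1) i := by
    funext ω
    rw [potential, Finset.sum_apply]
  rw [hsum]
  filter_upwards [condExp_finsetSum (fun i _ => c.integrable_typePotential hγ₀ (n + 1) i) (c.F n),
    ae_all_iff.2 fun i => c.condExp_typePotential_succ_le hm hγ₀ n i] with ω hω hle
  rw [hω, Finset.sum_apply, potential, visibleExcess, Finset.mul_sum, ← Finset.sum_sub_distrib]
  exact Finset.sum_le_sum fun i _ => hle i

lemma ae_summable_visibleExcess_and_exists_tendsto_potential (hm : 0 < m) (hγ₀ : 0 < γ₀) :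
    ∀ᵐ ω ∂μ, (Summable fun n => m / visGamma γ₀ m n * visibleExcess (Fin m) (c.proportions n ω)) ∧
      ∃ l, Tendsto (fun n => c.potential n ω) atTop (𝓝 l) := by
  have : NeZero m := ⟨hm.ne'⟩
  refine ae_summable_and_exists_tendsto_of_condExp_le_sub (ℱ := c.F)
    (fun n => (Finset.measurable_fun_sum _ fun i _ =>
      c.measurable_typePotential n i).stronglyMeasurable)
    (fun n => ((measurable_visibleExcess.comp (c.measurable_proportions n)).const_mul
      _).stronglyMeasurable)
    (fun n => integrable_finsetSum _ fun i _ => c.integrable_typePotential hγ₀ n i)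
    (fun n ω => Finset.sum_nonneg fun i _ => c.typePotential_nonneg hγ₀ n i ω) (fun n ω => ?_)
    fun n => c.condExp_potential_succ_le hm hγ₀ n
  have hγ : 0 < visGamma γ₀ m n := visGamma_pos hγ₀ n
  exact mul_nonneg (by positivity)
    (visibleExcess_nonneg (fun i => c.x_pos hγ₀ n i ω) (c.sum_eq_one n ω))

end CondExp

lemma exists_tendsto_sum_neg_log (hγ₀ : 0 < γ₀) {ω : Ω} {l : ℝ}
    (hl : Tendsto (fun n => c.potential n ω) atTop (𝓝 l)) :
    ∃ L, Tendsto (fun n => ∑ i, -Real.log (c.x n i ω)) atTop (𝓝 L) := by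
  set r : ℕ → ℝ := fun n => ∑ i, 2 * m / (visGamma γ₀ m n * c.x n i ω)
  have hanti : Antitone r := fun k n hkn => Finset.sum_le_sum fun i _ =>
    div_le_div_of_nonneg_left (by positivity) (c.visGamma_mul_x_pos hγ₀ k i ω)
      (c.monotone_visGamma_mul_x hγ₀ i ω hkn)
  have hbdd : BddBelow (Set.range r) := ⟨0, by
    rintro _ ⟨n, rfl⟩
    exact Finset.sum_nonneg fun i _ => div_nonneg (by positivity)
      (c.visGamma_mul_x_pos hγ₀ n i ω).le⟩
  refine ⟨_, (hl.sub (tendsto_atTop_ciInf hanti hbdd)).congr fun n => ?_⟩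
  simp [r, potential, typePotential, Finset.sum_add_distrib]

end VisChain

theorem visible_type_converges_to_uniform_general
    {Ω : Type*} [MeasurableSpace Ω] (μ : Measure Ω) [IsFiniteMeasure μ]
    (N m : ℕ) (hm : 3 ≤ m) (γ₀ : ℝ) (hγ₀ : 0 < γ₀) (c : VisChain μ N m γ₀) (i : Fin N) :
    ∀ᵐ ω ∂μ, Tendsto (fun n => c.x n i ω) atTop (𝓝 (1 / (N : ℝ))) := by
  have hm0 : 0 < m := by omega
  filter_upwards [c.ae_summable_visibleExcess_and_exists_tendsto_potential hm0 hγ₀]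
    with ω ⟨hsum, l, hl⟩
  obtain ⟨L, hL⟩ := c.exists_tendsto_sum_neg_log hγ₀ hl
  have hlim := tendsto_inv_card_of_summable_mul_visibleExcess (κ := Fin m) (by simpa)
    (fun n => div_nonneg (Nat.cast_nonneg m) (visGamma_pos hγ₀ n).le)
    (not_summable_const_div_visGamma hγ₀ hm0) (fun n j => c.x_pos hγ₀ n j ω)
    (fun n => c.sum_eq_one n ω) hsum hL
  simpa using tendsto_pi_nhds.1 hlim i

/-- In the choose-random-visible-type chain with `N ≥ 2` types and `m ≥ 3` choices, for every
type `i`, almost surely the proportion `x_i(n)` converges to `1/N`. -/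
theorem visible_type_converges_to_uniform
    {Ω : Type*} [MeasurableSpace Ω] (μ : Measure Ω) [IsProbabilityMeasure μ]
    (N m : ℕ) (hN : 2 ≤ N) (hm : 3 ≤ m) (γ₀ : ℝ) (hγ₀ : 2 ≤ γ₀)
    (c : VisChain μ N m γ₀) (i : Fin N) :
    ∀ᵐ ω ∂μ, Tendsto (fun n => c.x n i ω) atTop (𝓝 (1 / (N : ℝ))) := by
  exact visible_type_converges_to_uniform_general μ N m hm γ₀ (by linarith) c i
end
end
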